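/- arXiv:2501.11303 — 2 statements merged into one kernel-verified Lean document; each statement's English description precedes it below -/
import Mathlib

section
/- Let k=(k_1,…,k_r) be a composition and let α∈ℂ∖ℕ with ℜ(α)<1. Then ∫_0^1 A(k;x)/(x·((1−x)/(1+x))^α) dx = T((←k^∨)_+; 1−α). -/
open scoped BigOperators
open MeasureTheory

/-- Multiple polylogarithm `Li_k(z) = Σ_{n₁>⋯>n_r>0} z^{n₁}/(n₁^{k₁}⋯n_r^{k_r})`. -/
noncomputable def MPL (k : List ℕ) (z : ℝ) : ℝ :=
  if h : 0 < k.length then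
    ∑' n : {n : Fin k.length → ℕ // StrictAnti n ∧ ∀ i, 0 < n i},
      z ^ (n.1 ⟨0, h⟩) / ∏ i, (n.1 i : ℝ) ^ k.get i
  else 1

/-- Level-two multiple polylogarithm
`A(k;x) = 2^r Σ_{n₁>⋯>n_r>0, n_j ≡ r+1-j (mod 2)} x^{n₁}/(n₁^{k₁}⋯n_r^{k_r})`. -/
noncomputable def AFn (k : List ℕ) (x : ℝ) : ℝ :=
  if h : 0 < k.length then
    2 ^ k.length *
      ∑' n : {n : Fin k.length → ℕ //
          StrictAnti n ∧ (∀ i, 0 < n i) ∧ ∀ i, n i % 2 = (k.length - i.val) % 2},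
        x ^ (n.1 ⟨0, h⟩) / ∏ i, (n.1 i : ℝ) ^ k.get i
  else 1

/-- Multiple zeta value `ζ(k) = Σ_{n₁>⋯>n_r>0} ∏ 1/n_i^{k_i}`. -/
noncomputable def MZV (k : List ℕ) : ℝ :=
  ∑' n : {n : Fin k.length → ℕ // StrictAnti n ∧ ∀ i, 0 < n i},
    ∏ i, 1 / (n.1 i : ℝ) ^ k.get i

/-- Multiple zeta star value `ζ⋆(k) = Σ_{n₁≥⋯≥n_r>0} ∏ 1/n_i^{k_i}`. -/
noncomputable def MZSV (k : List ℕ) : ℝ :=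
  ∑' n : {n : Fin k.length → ℕ // Antitone n ∧ ∀ i, 0 < n i},
    ∏ i, 1 / (n.1 i : ℝ) ^ k.get i

/-- Multiple T-value `T(k) = 2^r Σ_{n₁>⋯>n_r>0, n_j ≡ r+1-j (mod 2)} ∏ 1/n_i^{k_i}`. -/
noncomputable def MTV (k : List ℕ) : ℝ :=
  2 ^ k.length *
    ∑' n : {n : Fin k.length → ℕ //
        StrictAnti n ∧ (∀ i, 0 < n i) ∧ ∀ i, n i % 2 = (k.length - i.val) % 2},
      ∏ i, 1 / (n.1 i : ℝ) ^ k.get i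

/-- Hurwitz-type multiple zeta value `ζ(k;α) = Σ_{n₁>⋯>n_r>0} ∏ (n_i+α-1)^{-k_i}`. -/
noncomputable def HMZV (k : List ℕ) (α : ℂ) : ℂ :=
  ∑' n : {n : Fin k.length → ℕ // StrictAnti n ∧ ∀ i, 0 < n i},
    ∏ i, ((n.1 i : ℂ) + α - 1) ^ (-(k.get i : ℤ))

/-- Hurwitz-type multiple zeta star value `ζ⋆(k;α) = Σ_{n₁≥⋯≥n_r>0} ∏ (n_i+α-1)^{-k_i}`. -/
noncomputable def HMZSV (k : List ℕ) (α : ℂ) : ℂ :=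
  ∑' n : {n : Fin k.length → ℕ // Antitone n ∧ ∀ i, 0 < n i},
    ∏ i, ((n.1 i : ℂ) + α - 1) ^ (-(k.get i : ℤ))

/-- Hurwitz-type multiple T-value
`T(k;α) = Σ_{m₁>⋯>m_r>0} 2^r ∏_i (2m_i - r - 2 + i + α)^{-k_i}` (1-indexed `i`). -/
noncomputable def HMTV (k : List ℕ) (α : ℂ) : ℂ :=
  ∑' n : {n : Fin k.length → ℕ // StrictAnti n ∧ ∀ i, 0 < n i},
    2 ^ k.length *
      ∏ i, (2 * (n.1 i : ℂ) - (k.length : ℂ) - 1 + (i.val : ℂ) + α) ^ (-(k.get i : ℤ))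

/-- The boolean word (sequence of bits between consecutive units) of a composition. -/
def toWord : List ℕ → List Bool
  | [] => []
  | [a] => List.replicate (a - 1) false
  | a :: b :: rest => List.replicate (a - 1) false ++ true :: toWord (b :: rest)

/-- The composition corresponding to a boolean word. -/
def fromWord : List Bool → List ℕ
  | [] => [1]
  | false :: w =>
    match fromWord w with
    | [] => [1]
    | a :: t => (a + 1) :: t
  | true :: w => 1 :: fromWord w

/-- Hoffman dual of a composition: swap commas and plus signs in
`k = (1+⋯+1, …, 1+⋯+1)`. -/
def HDual (k : List ℕ) : List ℕ := fromWord ((toWord k).map fun b => !b)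

/-- `k₊ = (k₁+1, k₂, …, k_r)`. -/
def plusOne : List ℕ → List ℕ
  | [] => []
  | a :: t => (a + 1) :: t

/-- `Refines l k` means the composition `k` can be obtained from `l`
by combining some consecutive parts of `l`, i.e. `l ⪰ k`. -/
inductive Refines : List ℕ → List ℕ → Prop
  | nil : Refines [] []
  | cons (b l k : List ℕ) : b ≠ [] → Refines l k → Refines (b ++ l) (b.sum :: k)

/-- Arakawa–Kaneko zeta function `ξ(s;k) = (1/Γ(s)) ∫_0^∞ t^{s-1}/(e^t-1) Li_k(1-e^{-t}) dt`. -/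
noncomputable def xiAK (s : ℂ) (k : List ℕ) : ℂ :=
  (1 / Complex.Gamma s) *
    ∫ t in Set.Ioi (0 : ℝ),
      (t : ℂ) ^ (s - 1) / ((Real.exp t : ℂ) - 1) * (MPL k (1 - Real.exp (-t)) : ℂ)

/-- Kaneko–Tsumura η-function `η(s;k) = (1/Γ(s)) ∫_0^∞ t^{s-1}/(1-e^t) Li_k(1-e^{t}) dt`. -/
noncomputable def etaKT (s : ℂ) (k : List ℕ) : ℂ :=
  (1 / Complex.Gamma s) *
    ∫ t in Set.Ioi (0 : ℝ),
      (t : ℂ) ^ (s - 1) / (1 - (Real.exp t : ℂ)) * (MPL k (1 - Real.exp t) : ℂ)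

/-- Kaneko–Tsumura ψ-function `ψ(s;k) = (1/Γ(s)) ∫_0^∞ t^{s-1} A(k; tanh(t/2))/sinh(t) dt`. -/
noncomputable def psiKT (s : ℂ) (k : List ℕ) : ℂ :=
  (1 / Complex.Gamma s) *
    ∫ t in Set.Ioi (0 : ℝ),
      (t : ℂ) ^ (s - 1) * ((AFn k (Real.tanh (t / 2)) / Real.sinh t : ℝ) : ℂ)

/-- Riemann zeta value `ζ(a) = Σ_{n>0} 1/n^a`. -/
noncomputable def zeta1 (a : ℕ) : ℝ := ∑' n : {n : ℕ // 0 < n}, 1 / (n.1 : ℝ) ^ a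

/-- Double zeta value `ζ(a,b) = Σ_{n₁>n₂>0} 1/(n₁^a n₂^b)`. -/
noncomputable def zeta2 (a b : ℕ) : ℝ :=
  ∑' p : {p : ℕ × ℕ // p.2 < p.1 ∧ 0 < p.2}, 1 / ((p.1.1 : ℝ) ^ a * (p.1.2 : ℝ) ^ b)

/-- Single T-value `T(a) = 2 Σ_{n>0 odd} 1/n^a`. -/
noncomputable def T1 (a : ℕ) : ℝ := 2 * ∑' n : {n : ℕ // 0 < n ∧ n % 2 = 1}, 1 / (n.1 : ℝ) ^ a

/-- Double T-value `T(a,b) = 4 Σ_{n₁>n₂>0, n₁ even, n₂ odd} 1/(n₁^a n₂^b)`. -/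
noncomputable def T2 (a b : ℕ) : ℝ :=
  4 * ∑' p : {p : ℕ × ℕ // p.2 < p.1 ∧ 0 < p.2 ∧ p.1 % 2 = 0 ∧ p.2 % 2 = 1},
    1 / ((p.1.1 : ℝ) ^ a * (p.1.2 : ℝ) ^ b)

/-!
The substitution `x = tanh (t / 2)` turns `(1 - x) / (1 + x)` into `e^{-t}` and `dx / x` into
`dt / sinh t`, so the integral is the Laplace transform of `A(k; tanh (t / 2)) / sinh t` at `-α`.
As functions of `t`, prepending a part `1` to `k` replaces `A` by its primitive, and raising `k₁` by
one replaces `A` by the primitive of `A / sinh t`. Under the Laplace transform a primitive is a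
factor `1 / s`, while `1 / sinh t = 2 ∑ e^{-(2n+1)t}` opens a new summation over shifts of `s`.
Hence a comma in `k` raises the exponent of the current summation variable of the `T`-value and a
plus sign starts a new variable, an exchange of roles which is Hoffman duality.
-/

namespace LevelTwo

open Set

/-! ### The dual composition -/

/-- The exponents of `(←k^∨)₊`, innermost summation variable first, computed part by part from `k`.
The value `[1]` at the empty composition makes the recursion uniform. -/
def dualExponents : List ℕ → List ℕ
  | [] => [1]
  | a :: k => List.replicate (a - 1) 1 ++ plusOne (dualExponents k)

theorem plusOne_append {l : List ℕ} (hl : l ≠ []) (l' : List ℕ) :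
    plusOne (l ++ l') = plusOne l ++ l' := by
  cases l with
  | nil => contradiction
  | cons a l => rfl

theorem plusOne_reverse_plusOne (l : List ℕ) :
    plusOne (plusOne l).reverse = (plusOne (plusOne l.reverse).reverse).reverse := by
  rcases l with _ | ⟨a, l⟩
  · rfl
  · rcases l.eq_nil_or_concat with rfl | ⟨l, b, rfl⟩ <;> simp [plusOne]

theorem fromWord_ne_nil (w : List Bool) : fromWord w ≠ [] := by
  rcases w with _ | ⟨_ | _, w⟩
  · simp [fromWord]
  · simp only [fromWord]
    split <;> simp
  · simp [fromWord]

theorem fromWord_false_cons (w : List Bool) : fromWord (false :: w) = plusOne (fromWord w) := by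
  obtain ⟨a, l, h⟩ := List.exists_cons_of_ne_nil (fromWord_ne_nil w)
  simp [fromWord, h, plusOne]

theorem fromWord_replicate_true (m : ℕ) :
    fromWord (List.replicate m true) = 1 :: List.replicate m 1 := by
  induction m with
  | zero => rfl
  | succ m ih => simp [List.replicate_succ, fromWord, ih]

theorem fromWord_append_replicate_true (w : List Bool) (m : ℕ) :
    fromWord (w ++ List.replicate m true) = fromWord w ++ List.replicate m 1 := by
  induction w with
  | nil => exact fromWord_replicate_true m
  | cons b w ih =>
    cases b with
    | false =>
      rw [List.cons_append, fromWord_false_cons, fromWord_false_cons, ih,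
        plusOne_append (fromWord_ne_nil w)]
    | true => simp [fromWord, ih]

theorem reverse_fromWord_append_false (w : List Bool) :
    (fromWord (w ++ [false])).reverse = plusOne (fromWord w).reverse := by
  induction w with
  | nil => rfl
  | cons b w ih =>
    cases b with
    | false =>
      rw [List.cons_append, fromWord_false_cons, fromWord_false_cons, plusOne_reverse_plusOne, ← ih,
        List.reverse_reverse]
    | true => simp [fromWord, ih, plusOne_append, fromWord_ne_nil]

theorem toWord_append_singleton {l : List ℕ} (hl : l ≠ []) (a : ℕ) :
    toWord (l ++ [a]) = toWord l ++ true :: List.replicate (a - 1) false := by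
  induction l with
  | nil => contradiction
  | cons b l ih =>
    cases l with
    | nil => simp [toWord]
    | cons c l =>
      have := ih (by simp)
      simp_all [toWord]

theorem reverse_HDual_append_singleton {l : List ℕ} (hl : l ≠ []) (a : ℕ) :
    (HDual (l ++ [a])).reverse = List.replicate (a - 1) 1 ++ plusOne (HDual l).reverse := by
  have word : (toWord (l ++ [a])).map (fun b => !b) =
      ((toWord l).map (fun b => !b) ++ [false]) ++ List.replicate (a - 1) true := by
    simp [toWord_append_singleton hl]
  rw [HDual, word, fromWord_append_replicate_true, List.reverse_append, List.reverse_replicate,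
    reverse_fromWord_append_false, HDual]

theorem reverse_plusOne_HDual_reverse {k : List ℕ} (hk : k ≠ []) :
    (plusOne (HDual k.reverse)).reverse = dualExponents k := by
  induction k with
  | nil => contradiction
  | cons a k ih =>
    rcases eq_or_ne k [] with rfl | hk'
    · simp [HDual, toWord, fromWord_replicate_true, dualExponents, plusOne]
    · have hne : k.reverse ≠ [] := by simpa using hk'
      have hdual : HDual (k.reverse ++ [a]) =
          (plusOne (HDual k.reverse).reverse).reverse ++ List.replicate (a - 1) 1 := by
        rw [← List.reverse_reverse (HDual _), reverse_HDual_append_singleton hne,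
          List.reverse_append, List.reverse_replicate]
      have hne' : (plusOne (HDual k.reverse).reverse).reverse ≠ [] := by
        rw [HDual, ← reverse_fromWord_append_false, List.reverse_reverse]
        exact fromWord_ne_nil _
      rw [List.reverse_cons, hdual, plusOne_append hne', List.reverse_append,
        List.reverse_replicate, ← plusOne_reverse_plusOne, ih hk', dualExponents]

/-! ### The level-two polylogarithm as a sum over tuples -/

/-- The first entry of a tuple, and `0` for the empty tuple. -/
def leading : {r : ℕ} → (Fin r → ℕ) → ℕ
  | 0, _ => 0
  | _ + 1, n => n 0

/-- The summation indices `n₁ > ⋯ > n_r > 0` with `n_j ≡ r + 1 - j (mod 2)` of `A(k; x)`. -/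
abbrev ParityTuple (r : ℕ) : Type :=
  {n : Fin r → ℕ // StrictAnti n ∧ (∀ i, 0 < n i) ∧ ∀ i, n i % 2 = (r - i.val) % 2}

namespace ParityTuple

variable {r : ℕ}

theorem leading_mod_two (n : ParityTuple r) : leading n.1 % 2 = r % 2 := by
  cases r with
  | zero => rfl
  | succ r => simpa [leading] using n.2.2.2 0

theorem le_leading (n : ParityTuple r) (i : Fin r) : n.1 i ≤ leading n.1 := by
  cases r with
  | zero => exact i.elim0
  | succ r => exact n.2.1.antitone (Fin.zero_le i)

/-- Prepends to a tuple the `j`-th admissible larger entry. -/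
def cons (n : ParityTuple r) (j : ℕ) : ParityTuple (r + 1) :=
  ⟨Fin.cons (leading n.1 + 1 + 2 * j) n.1, by
    refine ⟨fun a b hab => ?_, Fin.cases ?_ fun i => ?_, Fin.cases ?_ fun i => ?_⟩
    · obtain ⟨b, rfl⟩ := Fin.exists_succ_eq.2 (Fin.ne_zero_of_lt hab)
      induction a using Fin.cases with
      | zero =>
        have := n.le_leading b
        simp only [Fin.cons_zero, Fin.cons_succ]
        omega
      | succ a => simpa using n.2.1 (Fin.succ_lt_succ_iff.1 hab)
    · simp
    · simpa using n.2.2.1 i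
    · have := n.leading_mod_two
      simp only [Fin.cons_zero, Fin.val_zero]
      omega
    · simpa using n.2.2.2 i⟩

/-- Removes the first entry of a tuple. -/
def tail (n : ParityTuple (r + 1)) : ParityTuple r :=
  ⟨Fin.tail n.1, fun _ _ hab => n.2.1 (Fin.succ_lt_succ_iff.2 hab), fun i => n.2.2.1 i.succ,
    fun i => by simpa [Fin.tail] using n.2.2.2 i.succ⟩

theorem leading_tail_lt (n : ParityTuple (r + 1)) : leading n.tail.1 < n.1 0 := by
  cases r with
  | zero => exact n.2.2.1 0
  | succ r => exact n.2.1 (Fin.succ_pos 0)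

/-- The tuples of length `r + 1` arise uniquely from those of length `r` by prepending an entry. -/
def consEquiv (r : ℕ) : ParityTuple r × ℕ ≃ ParityTuple (r + 1) where
  toFun p := cons p.1 p.2
  invFun n := (n.tail, (n.1 0 - leading n.tail.1 - 1) / 2)
  left_inv p := by
    refine Prod.ext rfl ?_
    change (leading p.1.1 + 1 + 2 * p.2 - leading p.1.1 - 1) / 2 = p.2
    omega
  right_inv n := by
    have hlt := n.leading_tail_lt
    have hpar := n.tail.leading_mod_two
    have hpar₀ : n.1 0 % 2 = (r + 1) % 2 := n.2.2.2 0
    have hlead : leading n.tail.1 + 1 + 2 * ((n.1 0 - leading n.tail.1 - 1) / 2) = n.1 0 := by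
      omega
    refine Subtype.ext ?_
    simp only [cons, hlead]
    exact Fin.cons_self_tail n.1

instance : Unique (ParityTuple 0) where
  default := ⟨Fin.elim0, fun i => i.elim0, fun i => i.elim0, fun i => i.elim0⟩
  uniq _ := Subtype.ext (funext fun i => i.elim0)

end ParityTuple

/-- The summand of `A(k; x)` at the index `n`, including the factor `2 ^ r`. -/
noncomputable def polylogTerm (k : List ℕ) (n : ParityTuple k.length) (x : ℝ) : ℝ :=
  2 ^ k.length * (x ^ leading n.1 / ∏ i, (n.1 i : ℝ) ^ k.get i)

theorem polylogTerm_nonneg (k : List ℕ) (n : ParityTuple k.length) {x : ℝ} (hx : 0 ≤ x) :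
    0 ≤ polylogTerm k n x := by
  unfold polylogTerm
  positivity

theorem polylogTerm_zero_cons (k : List ℕ) (n : ParityTuple k.length) (j : ℕ) (x : ℝ) :
    polylogTerm (0 :: k) (ParityTuple.consEquiv k.length (n, j)) x =
      polylogTerm k n x * (2 * x * (x ^ 2) ^ j) := by
  have hprod : ∏ i : Fin (k.length + 1), ((n.cons j).1 i : ℝ) ^ (0 :: k).get i =
      ∏ i, (n.1 i : ℝ) ^ k.get i := by
    simp [Fin.prod_univ_succ, ParityTuple.cons]
  have hlead : leading (n.cons j).1 = leading n.1 + 1 + 2 * j := rfl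
  change 2 ^ (k.length + 1) * (x ^ leading (n.cons j).1 /
    ∏ i : Fin (k.length + 1), ((n.cons j).1 i : ℝ) ^ (0 :: k).get i) = _
  rw [hprod, hlead, polylogTerm]
  ring

theorem polylogTerm_succ_cons (a : ℕ) (k : List ℕ) (n : ParityTuple (k.length + 1)) (x : ℝ) :
    polylogTerm ((a + 1) :: k) n x = polylogTerm (a :: k) n x / n.1 0 := by
  change 2 ^ (k.length + 1) * (_ / ∏ i : Fin (k.length + 1), (n.1 i : ℝ) ^ ((a + 1) :: k).get i) =
    2 ^ (k.length + 1) * (_ / ∏ i : Fin (k.length + 1), (n.1 i : ℝ) ^ (a :: k).get i) / n.1 0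
  simp only [Fin.prod_univ_succ, List.get_cons_zero, List.get_cons_succ', pow_succ, div_eq_mul_inv,
    mul_inv]
  ring

theorem AFn_eq_tsum (k : List ℕ) (x : ℝ) : AFn k x = ∑' n, polylogTerm k n x := by
  cases k with
  | nil =>
    have : Unique (ParityTuple ([] : List ℕ).length) := inferInstanceAs (Unique (ParityTuple 0))
    rw [(hasSum_unique _).tsum_eq]
    simp [AFn, polylogTerm, leading]
  | cons a k =>
    rw [AFn, dif_pos (by simp), ← tsum_mul_left]
    rfl

theorem hasSum_odd_powers {x : ℝ} (hx₀ : 0 ≤ x) (hx₁ : x < 1) :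
    HasSum (fun j : ℕ => 2 * x * (x ^ 2) ^ j) (2 * x / (1 - x ^ 2)) := by
  rw [div_eq_mul_inv]
  exact (hasSum_geometric_of_lt_one (sq_nonneg x) (by nlinarith)).mul_left _

theorem hasSum_polylogTerm_zero_cons {k : List ℕ} {x S : ℝ} (hx₀ : 0 ≤ x) (hx₁ : x < 1)
    (h : HasSum (fun n => polylogTerm k n x) S) :
    HasSum (fun n => polylogTerm (0 :: k) n x) (S * (2 * x / (1 - x ^ 2))) := by
  have hodd := hasSum_odd_powers hx₀ hx₁
  have hprod := h.mul hodd <| h.summable.mul_of_nonneg hodd.summable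
    (fun n => polylogTerm_nonneg k n hx₀) fun j => by positivity
  refine ((ParityTuple.consEquiv k.length).hasSum_iff (f := fun n => polylogTerm (0 :: k) n x)).1 ?_
  exact hprod.congr_fun fun p => polylogTerm_zero_cons k p.1 p.2 x

theorem polylogTerm_succ_cons_le (a : ℕ) (k : List ℕ) (n : ParityTuple (k.length + 1)) {x : ℝ}
    (hx : 0 ≤ x) : polylogTerm ((a + 1) :: k) n x ≤ polylogTerm (a :: k) n x := by
  rw [polylogTerm_succ_cons]
  exact div_le_self (polylogTerm_nonneg (a :: k) n hx) (mod_cast n.2.2.1 0)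

theorem summable_polylogTerm (k : List ℕ) {x : ℝ} (hx₀ : 0 ≤ x) (hx₁ : x < 1) :
    Summable fun n => polylogTerm k n x := by
  induction k with
  | nil =>
    have : Unique (ParityTuple ([] : List ℕ).length) := inferInstanceAs (Unique (ParityTuple 0))
    exact (hasSum_unique _).summable
  | cons a k ih =>
    induction a with
    | zero => exact (hasSum_polylogTerm_zero_cons hx₀ hx₁ ih.hasSum).summable
    | succ a iha =>
      exact iha.of_nonneg_of_le (fun n => polylogTerm_nonneg _ n hx₀)
        fun n => polylogTerm_succ_cons_le a k n hx₀

theorem AFn_nonneg (k : List ℕ) {x : ℝ} (hx : 0 ≤ x) : 0 ≤ AFn k x := by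
  rw [AFn_eq_tsum]
  exact tsum_nonneg fun n => polylogTerm_nonneg k n hx

theorem AFn_zero_cons (k : List ℕ) {x : ℝ} (hx₀ : 0 ≤ x) (hx₁ : x < 1) :
    AFn (0 :: k) x = AFn k x * (2 * x / (1 - x ^ 2)) := by
  rw [AFn_eq_tsum, AFn_eq_tsum]
  exact (hasSum_polylogTerm_zero_cons hx₀ hx₁ (summable_polylogTerm k hx₀ hx₁).hasSum).tsum_eq

/-! ### The hyperbolic substitution -/

section

open Real

theorem tanh_half_pos {t : ℝ} (ht : 0 < t) : 0 < tanh (t / 2) := by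
  rw [tanh_eq_sinh_div_cosh]
  exact div_pos (sinh_pos_iff.2 (half_pos ht)) (cosh_pos _)

theorem tanh_half_nonneg {t : ℝ} (ht : 0 ≤ t) : 0 ≤ tanh (t / 2) := by
  rcases ht.eq_or_lt with rfl | ht
  · simp
  · exact (tanh_half_pos ht).le

theorem sinh_eq_two_mul_sinh_half (t : ℝ) : sinh t = 2 * sinh (t / 2) * cosh (t / 2) := by
  rw [← sinh_two_mul, mul_div_cancel₀ t two_ne_zero]

theorem two_mul_tanh_half_div (t : ℝ) :
    2 * tanh (t / 2) / (1 - tanh (t / 2) ^ 2) = sinh t := by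
  have hcosh := (cosh_pos (t / 2)).ne'
  have hne : cosh (t / 2) ^ 2 - sinh (t / 2) ^ 2 ≠ 0 := by simp [cosh_sq_sub_sinh_sq]
  rw [sinh_eq_two_mul_sinh_half t, tanh_eq_sinh_div_cosh]
  field_simp
  rw [cosh_sq_sub_sinh_sq, mul_one]

theorem one_sub_tanh_half_div (t : ℝ) :
    (1 - tanh (t / 2)) / (1 + tanh (t / 2)) = exp (-t) := by
  have hcosh := (cosh_pos (t / 2)).ne'
  have hexp : exp (-t) = exp (-(t / 2)) / exp (t / 2) := by rw [← exp_sub]; ring_nf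
  rw [hexp, ← cosh_sub_sinh, ← cosh_add_sinh, tanh_eq_sinh_div_cosh]
  field_simp

theorem hasDerivAt_tanh_half {t : ℝ} (ht : t ≠ 0) :
    HasDerivAt (fun u => tanh (u / 2)) (tanh (t / 2) / sinh t) t := by
  have hhalf : HasDerivAt (fun u : ℝ => u / 2) (1 / 2) t := (hasDerivAt_id t).div_const 2
  have hquot := hhalf.sinh.div hhalf.cosh (cosh_pos (t / 2)).ne'
  have hsinh : sinh (t / 2) ≠ 0 := by simpa [sinh_eq_zero] using ht
  have hcosh := (cosh_pos (t / 2)).ne'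
  simp only [tanh_eq_sinh_div_cosh]
  refine hquot.congr_deriv ?_
  rw [sinh_eq_two_mul_sinh_half t]
  field_simp
  exact cosh_sq_sub_sinh_sq _

theorem continuous_tanh_half : Continuous fun t : ℝ => tanh (t / 2) := by
  simp only [tanh_eq_sinh_div_cosh]
  exact (continuous_sinh.comp (by fun_prop)).div (continuous_cosh.comp (by fun_prop))
    fun t => (cosh_pos _).ne'

theorem hasDerivAt_tanh_half_pow_div {N : ℕ} (hN : 0 < N) {t : ℝ} (ht : t ≠ 0) :
    HasDerivAt (fun u => tanh (u / 2) ^ N / N) (tanh (t / 2) ^ N / sinh t) t := by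
  have hpow := ((hasDerivAt_tanh_half ht).pow N).div_const (N : ℝ)
  have hN' : (N : ℝ) ≠ 0 := by positivity
  refine hpow.congr_deriv ?_
  rw [← pow_sub_one_mul hN.ne' (tanh (t / 2))]
  field_simp

theorem tanh_half_pow_div_sinh_nonneg (N : ℕ) {t : ℝ} (ht : 0 ≤ t) :
    0 ≤ tanh (t / 2) ^ N / sinh t :=
  div_nonneg (pow_nonneg (tanh_half_nonneg ht) N) (sinh_nonneg_iff.2 ht)

theorem intervalIntegrable_tanh_half_pow_div_sinh {N : ℕ} (hN : 0 < N) {t : ℝ} (ht : 0 ≤ t) :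
    IntervalIntegrable (fun u => tanh (u / 2) ^ N / sinh u) volume 0 t := by
  rw [intervalIntegrable_iff_integrableOn_Ioc_of_le ht]
  exact intervalIntegral.integrableOn_deriv_of_nonneg
    (continuous_tanh_half.pow N |>.div_const (N : ℝ)).continuousOn
    (fun u hu => hasDerivAt_tanh_half_pow_div hN hu.1.ne')
    fun u hu => tanh_half_pow_div_sinh_nonneg N hu.1.le

theorem integral_tanh_half_pow_div_sinh {N : ℕ} (hN : 0 < N) {t : ℝ} (ht : 0 ≤ t) :
    ∫ u in (0 : ℝ)..t, tanh (u / 2) ^ N / sinh u = tanh (t / 2) ^ N / N := by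
  rw [intervalIntegral.integral_eq_sub_of_hasDerivAt_of_le ht
    (continuous_tanh_half.pow N |>.div_const (N : ℝ)).continuousOn
    (fun u hu => hasDerivAt_tanh_half_pow_div hN hu.1.ne')
    (intervalIntegrable_tanh_half_pow_div_sinh hN ht)]
  simp [hN.ne']

theorem image_tanh_half_Ioi : (fun t : ℝ => tanh (t / 2)) '' Ioi 0 = Ioo 0 1 := by
  ext x
  constructor
  · rintro ⟨t, ht, rfl⟩
    exact ⟨tanh_half_pos ht, tanh_lt_one _⟩
  · intro hx
    refine ⟨2 * artanh x, mul_pos two_pos (artanh_pos hx), ?_⟩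
    simp only [mul_div_cancel_left₀ _ (two_ne_zero' ℝ)]
    exact tanh_artanh ⟨by linarith [hx.1], hx.2⟩

/-- The function `t ↦ A(k; tanh (t / 2))`. -/
noncomputable def polylogTanh (k : List ℕ) (t : ℝ) : ℝ := AFn k (tanh (t / 2))

theorem measurable_polylogTanh (k : List ℕ) : Measurable (polylogTanh k) := by
  have hterm (n : ParityTuple k.length) :
      Measurable fun t : ℝ => polylogTerm k n (tanh (t / 2)) := by
    unfold polylogTerm
    exact (((continuous_tanh_half.pow _).div_const _).const_mul _).measurable
  have htsum : polylogTanh k = fun t => ∑' n, polylogTerm k n (tanh (t / 2)) :=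
    funext fun t => AFn_eq_tsum k _
  rw [htsum]
  exact Measurable.tsum hterm

theorem polylogTanh_nil (t : ℝ) : polylogTanh [] t = 1 := by simp [polylogTanh, AFn]

theorem polylogTanh_nonneg (k : List ℕ) {t : ℝ} (ht : 0 ≤ t) : 0 ≤ polylogTanh k t :=
  AFn_nonneg k (tanh_half_nonneg ht)

theorem polylogTanh_zero_cons (k : List ℕ) {t : ℝ} (ht : 0 ≤ t) :
    polylogTanh (0 :: k) t = polylogTanh k t * sinh t := by
  rw [polylogTanh, AFn_zero_cons k (tanh_half_nonneg ht) (tanh_lt_one _), two_mul_tanh_half_div]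
  rfl

theorem hasSum_polylogTanh (k : List ℕ) {t : ℝ} (ht : 0 ≤ t) :
    HasSum (fun n => polylogTerm k n (tanh (t / 2))) (polylogTanh k t) := by
  rw [polylogTanh, AFn_eq_tsum]
  exact (summable_polylogTerm k (tanh_half_nonneg ht) (tanh_lt_one _)).hasSum

theorem polylogTerm_eq_mul_pow (k : List ℕ) (n : ParityTuple k.length) (x : ℝ) :
    polylogTerm k n x = polylogTerm k n 1 * x ^ leading n.1 := by
  simp only [polylogTerm, one_pow]
  ring

theorem intervalIntegrable_polylogTerm_div_sinh (a : ℕ) (k : List ℕ)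
    (n : ParityTuple (k.length + 1)) {t : ℝ} (ht : 0 ≤ t) :
    IntervalIntegrable (fun u => polylogTerm (a :: k) n (tanh (u / 2)) / sinh u) volume 0 t := by
  simp_rw [polylogTerm_eq_mul_pow (a :: k) n (tanh _), mul_div_assoc]
  exact (intervalIntegrable_tanh_half_pow_div_sinh (n.2.2.1 0) ht).const_mul _

theorem integral_polylogTerm_div_sinh (a : ℕ) (k : List ℕ) (n : ParityTuple (k.length + 1))
    {t : ℝ} (ht : 0 ≤ t) :
    ∫ u in (0 : ℝ)..t, polylogTerm (a :: k) n (tanh (u / 2)) / sinh u =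
      polylogTerm ((a + 1) :: k) n (tanh (t / 2)) := by
  simp_rw [polylogTerm_succ_cons, polylogTerm_eq_mul_pow (a :: k) n (tanh _), mul_div_assoc]
  rw [intervalIntegral.integral_const_mul]
  exact congrArg _ (integral_tanh_half_pow_div_sinh (n.2.2.1 0) ht)

theorem polylogTanh_succ_cons (a : ℕ) (k : List ℕ) {t : ℝ} (ht : 0 ≤ t) :
    polylogTanh ((a + 1) :: k) t = ∫ u in (0 : ℝ)..t, polylogTanh (a :: k) u / sinh u := by
  let F (n : ParityTuple (k.length + 1)) (u : ℝ) : ℝ :=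
    polylogTerm (a :: k) n (tanh (u / 2)) / sinh u
  have hF_nonneg n {u} (hu : u ∈ Ioc 0 t) : 0 ≤ F n u :=
    div_nonneg (polylogTerm_nonneg (a :: k) n (tanh_half_nonneg hu.1.le))
      (sinh_nonneg_iff.2 hu.1.le)
  have hF_int n : IntegrableOn (F n) (Ioc 0 t) :=
    (intervalIntegrable_iff_integrableOn_Ioc_of_le ht).1
      (intervalIntegrable_polylogTerm_div_sinh a k n ht)
  have hF_integral n : ∫ u in Ioc 0 t, F n u = polylogTerm ((a + 1) :: k) n (tanh (t / 2)) := by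
    rw [← intervalIntegral.integral_of_le ht]
    exact integral_polylogTerm_div_sinh a k n ht
  have hF_norm n : ∫ u in Ioc 0 t, ‖F n u‖ = polylogTerm ((a + 1) :: k) n (tanh (t / 2)) := by
    rw [← hF_integral]
    exact setIntegral_congr_fun measurableSet_Ioc fun u hu => norm_of_nonneg (hF_nonneg n hu)
  have hlhs := hasSum_polylogTanh ((a + 1) :: k) ht
  have hsum := hasSum_integral_of_summable_integral_norm hF_int
    (hlhs.summable.congr fun n => (hF_norm n).symm)
  simp only [hF_integral] at hsum
  rw [hlhs.unique hsum, intervalIntegral.integral_of_le ht]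
  exact setIntegral_congr_fun measurableSet_Ioc fun u hu =>
    ((hasSum_polylogTanh (a :: k) hu.1.le).div_const (sinh u)).tsum_eq

theorem polylogTanh_succ_cons_le {a m : ℕ} {k : List ℕ}
    (h : ∀ u, 0 < u → polylogTanh (a :: k) u / sinh u ≤ u ^ m) {t : ℝ} (ht : 0 ≤ t) :
    polylogTanh ((a + 1) :: k) t ≤ t ^ (m + 1) := by
  have hbound : ∀ u ∈ uIoc 0 t, ‖polylogTanh (a :: k) u / sinh u‖ ≤ t ^ m := fun u hu => by
    rw [uIoc_of_le ht] at hu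
    rw [norm_of_nonneg (div_nonneg (polylogTanh_nonneg _ hu.1.le) (sinh_nonneg_iff.2 hu.1.le))]
    exact (h u hu.1).trans (pow_le_pow_left₀ hu.1.le hu.2 m)
  have hint := intervalIntegral.norm_integral_le_of_norm_le_const hbound
  rw [sub_zero, abs_of_nonneg ht, ← pow_succ] at hint
  rw [polylogTanh_succ_cons a k ht]
  exact (le_norm_self _).trans hint

theorem polylogTanh_cons_div_sinh_le {m : ℕ} {k : List ℕ}
    (h : ∀ u, 0 < u → polylogTanh k u ≤ u ^ m) (a : ℕ) {t : ℝ} (ht : 0 < t) :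
    polylogTanh (a :: k) t / sinh t ≤ t ^ m := by
  have hsinh : 0 < sinh t := sinh_pos_iff.2 ht
  induction a generalizing t with
  | zero =>
    rw [polylogTanh_zero_cons k ht.le, mul_div_cancel_right₀ _ hsinh.ne']
    exact h t ht
  | succ a ih =>
    rw [div_le_iff₀ hsinh]
    calc polylogTanh ((a + 1) :: k) t ≤ t ^ (m + 1) :=
          polylogTanh_succ_cons_le (fun u hu => ih hu (sinh_pos_iff.2 hu)) ht.le
      _ = t ^ m * t := pow_succ t m
      _ ≤ t ^ m * sinh t := by gcongr; exact self_le_sinh_iff.2 ht.le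

theorem polylogTanh_le {k : List ℕ} (hk : ∀ a ∈ k, 0 < a) {t : ℝ} (ht : 0 < t) :
    polylogTanh k t ≤ t ^ k.length := by
  induction k generalizing t with
  | nil => simp [polylogTanh_nil]
  | cons a k ih =>
    obtain ⟨b, rfl⟩ := Nat.exists_eq_succ_of_ne_zero (hk a (by simp)).ne'
    have ih' u (hu : 0 < u) : polylogTanh k u ≤ u ^ k.length :=
      ih (fun c hc => hk c (by simp [hc])) hu
    exact polylogTanh_succ_cons_le (fun u hu => polylogTanh_cons_div_sinh_le ih' b hu) ht.le

end

/-! ### The Laplace transform -/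

/-- Convergence of the integral defining `laplace f s`. -/
def LaplaceIntegrable (f : ℝ → ℂ) (s : ℂ) : Prop :=
  IntegrableOn (fun t : ℝ => Complex.exp (-(s * t)) * f t) (Ioi 0)

/-- The Laplace transform `∫₀^∞ e^{-st} f(t) dt`. -/
noncomputable def laplace (f : ℝ → ℂ) (s : ℂ) : ℂ :=
  ∫ t in Ioi (0 : ℝ), Complex.exp (-(s * t)) * f t

theorem laplace_congr {f g : ℝ → ℂ} (h : ∀ t, 0 < t → f t = g t) (s : ℂ) :
    laplace f s = laplace g s :=
  setIntegral_congr_fun measurableSet_Ioi fun t ht => by simp only [h t ht]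

theorem LaplaceIntegrable.congr {f g : ℝ → ℂ} {s : ℂ} (hf : LaplaceIntegrable f s)
    (h : ∀ t, 0 < t → f t = g t) : LaplaceIntegrable g s :=
  IntegrableOn.congr_fun hf (fun t ht => by simp only [h t ht]) measurableSet_Ioi

theorem laplaceIntegrable_of_norm_le {f : ℝ → ℂ} {s : ℂ} (m : ℕ) (hf : Measurable f)
    (hf_le : ∀ t, 0 < t → ‖f t‖ ≤ t ^ m) (hs : 0 < s.re) : LaplaceIntegrable f s := by
  have hbound : IntegrableOn (fun t : ℝ => t ^ (m : ℝ) * Real.exp (-s.re * t ^ (1 : ℝ))) (Ioi 0) :=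
    integrableOn_rpow_mul_exp_neg_mul_rpow (by linarith [m.cast_nonneg (α := ℝ)]) one_pos hs
  have hmeas : Measurable fun t : ℝ => Complex.exp (-(s * t)) * f t := by fun_prop
  refine hbound.mono' hmeas.aestronglyMeasurable
    ((ae_restrict_iff' measurableSet_Ioi).2 (.of_forall fun t ht => ?_))
  rw [norm_mul, Complex.norm_exp, mul_comm, Real.rpow_natCast, Real.rpow_one]
  refine mul_le_mul (hf_le t ht) (le_of_eq ?_) (Real.exp_pos _).le (pow_nonneg (le_of_lt ht) m)
  simp

theorem laplaceIntegrable_one {s : ℂ} (hs : 0 < s.re) : LaplaceIntegrable (fun _ => 1) s :=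
  laplaceIntegrable_of_norm_le 0 measurable_const (fun t _ => by simp) hs

theorem laplace_one {s : ℂ} (hs : 0 < s.re) : laplace (fun _ => 1) s = s⁻¹ := by
  have hneg : (-s).re < 0 := by simpa using hs
  simpa [laplace, neg_mul, div_eq_mul_inv] using integral_exp_mul_complex_Ioi hneg 0

theorem laplace_primitive {f : ℝ → ℂ} {s : ℂ} (hs : 0 < s.re) (hf : LaplaceIntegrable f s) :
    laplace (fun t => ∫ u in (0 : ℝ)..t, f u) s = s⁻¹ * laplace f s := by
  have hconv := integral_posConvolution hf (laplaceIntegrable_one hs) (ContinuousLinearMap.mul ℝ ℂ)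
  have hinner (t : ℝ) : Complex.exp (-(s * t)) * ∫ u in (0 : ℝ)..t, f u =
      ∫ u in (0 : ℝ)..t, Complex.exp (-(s * u)) * f u *
        (Complex.exp (-(s * (t - u : ℝ))) * 1) := by
    rw [← intervalIntegral.integral_const_mul]
    refine intervalIntegral.integral_congr fun u _ => ?_
    have hexp : Complex.exp (-(s * t)) =
        Complex.exp (-(s * u)) * Complex.exp (-(s * (t - u : ℝ))) := by
      rw [← Complex.exp_add]
      push_cast
      ring_nf
    simp only [hexp, mul_one]
    ring
  rw [← laplace_one hs, mul_comm]
  simp only [laplace, hinner]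
  exact hconv

theorem LaplaceIntegrable.sub_one {f : ℝ → ℂ} {s : ℂ}
    (hsinh : LaplaceIntegrable (fun t => Real.sinh t * f t) s) (hf : LaplaceIntegrable f (s + 1)) :
    LaplaceIntegrable f (s - 1) := by
  -- `e^t f = 2 (sinh t) f + e^{-t} f`
  refine ((hsinh.const_mul 2).add hf).congr (.of_forall fun t => ?_)
  have hleft : Complex.exp (-((s - 1) * t)) = Complex.exp (-(s * t)) * Complex.exp t := by
    rw [← Complex.exp_add]
    ring_nf
  have hright : Complex.exp (-((s + 1) * t)) = Complex.exp (-(s * t)) * Complex.exp (-t) := by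
    rw [← Complex.exp_add]
    ring_nf
  simp only [Pi.add_apply, hleft, hright, Complex.ofReal_sinh, Complex.sinh]
  ring

theorem hasSum_sinh_mul_exp {t : ℝ} (ht : 0 < t) :
    HasSum (fun n : ℕ => 2 * (Real.sinh t * Real.exp (-((1 + 2 * n) * t)))) 1 := by
  have hq : Real.exp (-(2 * t)) < 1 := Real.exp_lt_one_iff.2 (by linarith)
  have hgeom := (hasSum_geometric_of_lt_one (Real.exp_pos _).le hq).mul_left
    (1 - Real.exp (-(2 * t)))
  rw [mul_inv_cancel₀ (sub_pos.2 hq).ne'] at hgeom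
  refine hgeom.congr_fun fun n => ?_
  have hexp : Real.exp (-((1 + 2 * n) * t)) = Real.exp (-t) * Real.exp (-(2 * t)) ^ n := by
    rw [← Real.exp_nat_mul, ← Real.exp_add]
    ring_nf
  have hone : Real.exp t * Real.exp (-t) = 1 := by rw [← Real.exp_add]; simp
  have htwo : Real.exp (-(2 * t)) = Real.exp (-t) * Real.exp (-t) := by
    rw [← Real.exp_add]
    ring_nf
  rw [hexp, Real.sinh_eq, htwo]
  linear_combination (Real.exp (-t) * Real.exp (-t)) ^ n * hone

theorem two_mul_laplace_sinh_mul (f : ℝ → ℂ) (s : ℂ) (n : ℕ) :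
    2 * laplace (fun t => Real.sinh t * f t) (s + 1 + 2 * n) =
      ∫ t in Ioi (0 : ℝ), ((2 * (Real.sinh t * Real.exp (-((1 + 2 * n) * t))) : ℝ) : ℂ) *
        (Complex.exp (-(s * t)) * f t) := by
  rw [laplace, ← integral_const_mul]
  refine integral_congr_ae (.of_forall fun t => ?_)
  have hexp : Complex.exp (-((s + 1 + 2 * n) * t)) =
      Complex.exp (-(s * t)) * Complex.exp (-((1 + 2 * n) * t)) := by
    rw [← Complex.exp_add]
    ring_nf
  simp only [hexp]
  push_cast
  ring

theorem hasSum_laplace_sinh_mul {f : ℝ → ℂ} {s : ℂ} (hf : LaplaceIntegrable f s) :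
    HasSum (fun n : ℕ => 2 * laplace (fun t => Real.sinh t * f t) (s + 1 + 2 * n))
      (laplace f s) := by
  let c (n : ℕ) (t : ℝ) : ℝ := 2 * (Real.sinh t * Real.exp (-((1 + 2 * n) * t)))
  let h (t : ℝ) : ℂ := Complex.exp (-(s * t)) * f t
  have hpos : ∀ᵐ t ∂volume.restrict (Ioi (0 : ℝ)), 0 < t := ae_restrict_mem measurableSet_Ioi
  have hnorm n {t : ℝ} (ht : 0 < t) : ‖(c n t : ℂ) * h t‖ = c n t * ‖h t‖ := by
    have hc : 0 ≤ c n t :=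
      mul_nonneg zero_le_two (mul_nonneg (Real.sinh_nonneg_iff.2 ht.le) (Real.exp_pos _).le)
    rw [norm_mul, Complex.norm_of_nonneg hc]
  have hsum {t : ℝ} (ht : 0 < t) : HasSum (fun n => c n t * ‖h t‖) ‖h t‖ := by
    simpa only [one_mul] using (hasSum_sinh_mul_exp ht).mul_right ‖h t‖
  simp only [two_mul_laplace_sinh_mul]
  refine hasSum_integral_of_dominated_convergence (fun n t => c n t * ‖h t‖) (fun n => ?_)
    (fun n => ?_) ?_ ?_ ?_
  · have hc : Measurable fun t => (c n t : ℂ) := by fun_prop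
    exact hc.aestronglyMeasurable.mul hf.1
  · filter_upwards [hpos] with t ht using (hnorm n ht).le
  · filter_upwards [hpos] with t ht using (hsum ht).summable
  · refine hf.norm.congr ?_
    filter_upwards [hpos] with t ht using (hsum ht).tsum_eq.symm
  · filter_upwards [hpos] with t ht
    have hone : HasSum (fun n => (c n t : ℂ)) (1 : ℝ) :=
      Complex.hasSum_ofReal.2 (hasSum_sinh_mul_exp ht)
    simpa only [Complex.ofReal_one, one_mul] using hone.mul_right (h t)

/-! ### Hurwitz sums -/

/-- The summation indices `m₁ > ⋯ > m_r > 0` of `T(k; α)`. -/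
abbrev StrictAntiTuple (r : ℕ) : Type := {n : Fin r → ℕ // StrictAnti n ∧ ∀ i, 0 < n i}

namespace StrictAntiTuple

variable {r : ℕ}

/-- Appends the smallest entry `j + 1` after shifting all other entries up by `j + 1`. -/
def snoc (j : ℕ) (n : StrictAntiTuple r) : StrictAntiTuple (r + 1) :=
  ⟨Fin.snoc (α := fun _ => ℕ) (fun i => n.1 i + j + 1) (j + 1), by
    refine ⟨fun a b hab => ?_, Fin.lastCases ?_ fun i => ?_⟩
    · obtain ⟨a, rfl⟩ := Fin.exists_castSucc_eq.2 (Fin.ne_last_of_lt hab)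
      induction b using Fin.lastCases with
      | last => simpa using n.2.2 a
      | cast b => simpa using n.2.1 (Fin.castSucc_lt_castSucc_iff.1 hab)
    · simp
    · simp⟩

/-- Removes the smallest entry and shifts all other entries down by it. -/
def init (n : StrictAntiTuple (r + 1)) : StrictAntiTuple r :=
  ⟨fun i => n.1 i.castSucc - n.1 (Fin.last r), by
    refine ⟨fun a b hab => ?_, fun a => Nat.sub_pos_of_lt (n.2.1 (Fin.castSucc_lt_last a))⟩
    exact Nat.sub_lt_sub_right (n.2.1 (Fin.castSucc_lt_last b)).le
      (n.2.1 (Fin.castSucc_lt_castSucc_iff.2 hab))⟩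

/-- The tuples of length `r + 1` arise uniquely from those of length `r` by `snoc`. -/
def snocEquiv (r : ℕ) : ℕ × StrictAntiTuple r ≃ StrictAntiTuple (r + 1) where
  toFun p := snoc p.1 p.2
  invFun n := (n.1 (Fin.last r) - 1, n.init)
  left_inv p := by
    refine Prod.ext ?_ (Subtype.ext (funext fun i => ?_))
    · simp [snoc]
    · simp [snoc, init]
  right_inv n := by
    have hlast := n.2.2 (Fin.last r)
    refine Subtype.ext (funext (Fin.lastCases ?_ fun i => ?_))
    · simp only [snoc, Fin.snoc_last]
      omega
    · have := n.2.1 (Fin.castSucc_lt_last i)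
      simp only [snoc, init, Fin.snoc_castSucc]
      omega

instance : Unique (StrictAntiTuple 0) where
  default := ⟨Fin.elim0, fun i => i.elim0, fun i => i.elim0⟩
  uniq _ := Subtype.ext (funext fun i => i.elim0)

end StrictAntiTuple

/-- The summand of `T(k; s)` at the index `n`, for the composition `k` whose reversal is `L`. -/
noncomputable def hurwitzTerm (L : List ℕ) (s : ℂ) (n : StrictAntiTuple L.length) : ℂ :=
  2 ^ L.length * ∏ i, (2 * (n.1 i : ℂ) - (L.length : ℂ) - 1 + (i.val : ℂ) + s) ^
    (-(L.get i.rev : ℤ))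

theorem HMTV_ofFn {r : ℕ} (e : Fin r → ℕ) (s : ℂ) :
    HMTV (List.ofFn e) s = ∑' n : StrictAntiTuple r,
      2 ^ r * ∏ i, (2 * (n.1 i : ℂ) - (r : ℂ) - 1 + (i.val : ℂ) + s) ^ (-(e i : ℤ)) := by
  obtain ⟨k, hk⟩ : ∃ k, k = List.ofFn e := ⟨_, rfl⟩
  obtain rfl : r = k.length := by rw [hk, List.length_ofFn]
  obtain rfl : e = k.get := List.ofFn_injective (hk.symm.trans (List.ofFn_get k).symm)
  rw [List.ofFn_get]
  rfl

theorem HMTV_reverse (L : List ℕ) (s : ℂ) : HMTV L.reverse s = ∑' n, hurwitzTerm L s n := by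
  have hrev : L.reverse = List.ofFn fun i : Fin L.length => L.get i.rev := by
    refine List.ext_getElem (by simp) fun i _ _ => ?_
    simp [Fin.rev, Nat.sub_sub, Nat.add_comm]
  rw [hrev, HMTV_ofFn]
  rfl

theorem hurwitzTerm_nil (s : ℂ) (n : StrictAntiTuple ([] : List ℕ).length) :
    hurwitzTerm [] s n = 1 := by
  simp [hurwitzTerm]

theorem hurwitzTerm_cons (d : ℕ) (L : List ℕ) (s : ℂ) (j : ℕ) (n : StrictAntiTuple L.length) :
    hurwitzTerm (d :: L) s (StrictAntiTuple.snocEquiv L.length (j, n)) =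
      2 * ((s + 2 * j) ^ (-(d : ℤ)) * hurwitzTerm L (s + 2 * j + 1) n) := by
  change 2 ^ (L.length + 1) * ∏ i : Fin (L.length + 1), (2 * ((n.snoc j).1 i : ℂ) -
    ((L.length + 1 : ℕ) : ℂ) - 1 + (i.val : ℂ) + s) ^ (-((d :: L).get i.rev : ℤ)) = _
  have hinit (i : Fin L.length) : 2 * ((n.1 i + j + 1 : ℕ) : ℂ) - ((L.length + 1 : ℕ) : ℂ) - 1 +
      (i.val : ℂ) + s = 2 * (n.1 i : ℂ) - (L.length : ℂ) - 1 + (i.val : ℂ) + (s + 2 * j + 1) := by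
    push_cast
    ring
  have hlast : 2 * ((j + 1 : ℕ) : ℂ) - ((L.length + 1 : ℕ) : ℂ) - 1 + (L.length : ℂ) + s =
      s + 2 * j := by
    push_cast
    ring
  simp only [Fin.prod_univ_castSucc, StrictAntiTuple.snoc, Fin.snoc_castSucc, Fin.snoc_last,
    Fin.val_castSucc, Fin.val_last, Fin.rev_last, Fin.rev_castSucc, List.get_cons_succ',
    List.get_cons_zero, hinit, hlast, hurwitzTerm]
  ring

theorem re_add_two_mul (s : ℂ) (j : ℕ) : (s + 2 * j).re = s.re + 2 * j := by simp

theorem norm_zpow_neg_le {s : ℂ} (hs : 0 < s.re) (d : ℕ) :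
    ‖s ^ (-(d : ℤ))‖ ≤ ‖(s.re : ℂ) ^ (-(d : ℤ))‖ := by
  simp only [zpow_neg, zpow_natCast, norm_inv, norm_pow, Complex.norm_of_nonneg hs.le]
  gcongr
  exact Complex.re_le_norm s

theorem norm_hurwitzTerm_le {L : List ℕ} {s : ℂ} (hs : 0 < s.re) (n : StrictAntiTuple L.length) :
    ‖hurwitzTerm L s n‖ ≤ ‖hurwitzTerm L s.re n‖ := by
  induction L generalizing s with
  | nil => simp [hurwitzTerm_nil]
  | cons d L ih =>
    obtain ⟨⟨j, n⟩, rfl⟩ := (StrictAntiTuple.snocEquiv L.length).surjective n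
    have hre := re_add_two_mul s j
    have hfactor := norm_zpow_neg_le (s := s + 2 * j) (by rw [hre]; positivity) d
    have hpos : 0 < (s + 2 * j + 1).re := by rw [Complex.add_re, hre, Complex.one_re]; positivity
    have hrest := ih hpos n
    rw [Complex.add_re, Complex.one_re] at hrest
    rw [hre] at hfactor hrest
    push_cast at hfactor hrest
    simp only [hurwitzTerm_cons, norm_mul]
    gcongr

theorem norm_hurwitzTerm_ofReal {L : List ℕ} {σ : ℝ} (hσ : 0 < σ) (n : StrictAntiTuple L.length) :
    ‖hurwitzTerm L σ n‖ = (hurwitzTerm L σ n).re := by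
  suffices (‖hurwitzTerm L σ n‖ : ℂ) = hurwitzTerm L σ n by rw [← this, Complex.ofReal_re, this]
  induction L generalizing σ with
  | nil => simp [hurwitzTerm_nil]
  | cons d L ih =>
    obtain ⟨⟨j, n⟩, rfl⟩ := (StrictAntiTuple.snocEquiv L.length).surjective n
    have hbase : (0 : ℝ) ≤ σ + 2 * j := by positivity
    have hfactor : ‖(σ : ℂ) + 2 * j‖ = σ + 2 * j := mod_cast Complex.norm_of_nonneg hbase
    have hrest := ih (σ := σ + 2 * j + 1) (by positivity) n
    push_cast at hrest
    simp only [hurwitzTerm_cons, norm_mul, norm_zpow, hfactor, Complex.norm_ofNat]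
    push_cast
    rw [hrest]

theorem hasSum_prod_of_norm_le {β γ E : Type*} [NormedAddCommGroup E] [CompleteSpace E]
    {f : β × γ → E} {g : β × γ → ℝ} {F : β → E} {G : β → ℝ} {a : E} (hfg : ∀ p, ‖f p‖ ≤ g p)
    (hg : ∀ b, HasSum (fun c => g (b, c)) (G b)) (hG : Summable G)
    (hf : ∀ b, HasSum (fun c => f (b, c)) (F b)) (hF : HasSum F a) : HasSum f a := by
  have hg_summable : Summable g :=
    (summable_prod_of_nonneg fun p => (norm_nonneg _).trans (hfg p)).2
      ⟨fun b => (hg b).summable, hG.congr fun b => (hg b).tsum_eq.symm⟩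
  have hf_sum := (hg_summable.of_norm_bounded hfg).hasSum
  rwa [hF.unique (hf_sum.prod_fiberwise hf)]

theorem hasSum_hurwitzTerm_cons {d : ℕ} {L : List ℕ} {F J : ℂ → ℂ}
    (hF : ∀ s : ℂ, 0 < s.re → HasSum (fun n => s ^ (-(d : ℤ)) * hurwitzTerm L (s + 1) n) (F s))
    (hJ : ∀ s : ℂ, 0 < s.re → HasSum (fun j : ℕ => 2 * F (s + 2 * j)) (J s))
    {s : ℂ} (hs : 0 < s.re) : HasSum (hurwitzTerm (d :: L) s) (J s) := by
  let term (s : ℂ) (p : ℕ × StrictAntiTuple L.length) : ℂ :=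
    hurwitzTerm (d :: L) s (StrictAntiTuple.snocEquiv L.length p)
  have hfiber {s : ℂ} (hs : 0 < s.re) (j : ℕ) :
      HasSum (fun n => term s (j, n)) (2 * F (s + 2 * j)) := by
    have hpos : 0 < (s + 2 * j).re := by rw [re_add_two_mul]; positivity
    simpa only [term, hurwitzTerm_cons] using (hF _ hpos).mul_left 2
  have hσ : 0 < (s.re : ℂ).re := hs
  have hnorm (j : ℕ) : HasSum (fun n => ‖term s.re (j, n)‖) (2 * F (s.re + 2 * j)).re :=
    (Complex.hasSum_re (hfiber hσ j)).congr_fun fun n => norm_hurwitzTerm_ofReal hs _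
  refine (StrictAntiTuple.snocEquiv L.length).hasSum_iff.1 ?_
  exact hasSum_prod_of_norm_le (fun p => norm_hurwitzTerm_le hs _) hnorm
    (Complex.hasSum_re (hJ _ hσ)).summable (hfiber hs) (hJ s hs)

/-! ### The Laplace transform of `A(k; tanh (t / 2))` -/

theorem laplaceIntegrable_polylogTanh {k : List ℕ} (hk : ∀ a ∈ k, 0 < a) {s : ℂ} (hs : 0 < s.re) :
    LaplaceIntegrable (fun t => polylogTanh k t) s := by
  refine laplaceIntegrable_of_norm_le k.length
    (Complex.measurable_ofReal.comp (measurable_polylogTanh k)) (fun t ht => ?_) hs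
  rw [Complex.norm_of_nonneg (polylogTanh_nonneg k ht.le)]
  exact polylogTanh_le hk ht

theorem laplaceIntegrable_polylogTanh_div_sinh {k : List ℕ} (hk : ∀ a ∈ k, 0 < a) (a : ℕ) {s : ℂ}
    (hs : 0 < s.re) : LaplaceIntegrable (fun t => polylogTanh (a :: k) t / Real.sinh t) s := by
  have hmeas : Measurable fun t => (polylogTanh (a :: k) t / Real.sinh t : ℂ) :=
    (Complex.measurable_ofReal.comp (measurable_polylogTanh _)).div (by fun_prop)
  refine laplaceIntegrable_of_norm_le k.length hmeas (fun t ht => ?_) hs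
  rw [← Complex.ofReal_div, Complex.norm_of_nonneg
    (div_nonneg (polylogTanh_nonneg _ ht.le) (Real.sinh_nonneg_iff.2 ht.le))]
  exact polylogTanh_cons_div_sinh_le (fun u hu => polylogTanh_le hk hu) a ht

theorem sinh_mul_div_sinh (f : ℝ → ℂ) {t : ℝ} (ht : 0 < t) :
    Real.sinh t * (f t / Real.sinh t) = f t :=
  mul_div_cancel₀ _ (mod_cast (Real.sinh_pos_iff.2 ht).ne')

theorem laplaceIntegrable_polylogTanh_div_sinh_sub_one {k : List ℕ} (hne : k ≠ [])
    (hk : ∀ a ∈ k, 0 < a) {s : ℂ} (hs : 0 < s.re) :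
    LaplaceIntegrable (fun t => polylogTanh k t / Real.sinh t) (s - 1) := by
  refine LaplaceIntegrable.sub_one ?_ ?_
  · exact (laplaceIntegrable_polylogTanh hk hs).congr fun t ht =>
      (sinh_mul_div_sinh (fun t => polylogTanh k t) ht).symm
  · obtain ⟨a, k, rfl⟩ := List.exists_cons_of_ne_nil hne
    refine laplaceIntegrable_polylogTanh_div_sinh (fun c hc => hk c (by simp [hc])) a ?_
    rw [Complex.add_re, Complex.one_re]
    positivity

theorem hasSum_laplace_polylogTanh {k : List ℕ} (hne : k ≠ []) (hk : ∀ a ∈ k, 0 < a) {s : ℂ}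
    (hs : 0 < s.re) :
    HasSum (fun j : ℕ => 2 * laplace (fun t => polylogTanh k t) (s + 2 * j))
      (laplace (fun t => polylogTanh k t / Real.sinh t) (s - 1)) := by
  have hsum := hasSum_laplace_sinh_mul (laplaceIntegrable_polylogTanh_div_sinh_sub_one hne hk hs)
  simp only [laplace_congr (fun _ ht => sinh_mul_div_sinh (fun t => polylogTanh k t) ht),
    sub_add_cancel] at hsum
  exact hsum

theorem laplace_polylogTanh_succ_cons {k : List ℕ} (hk : ∀ a ∈ k, 0 < a) (a : ℕ) {s : ℂ}
    (hs : 0 < s.re) : laplace (fun t => polylogTanh ((a + 1) :: k) t) s =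
      s⁻¹ * laplace (fun t => polylogTanh (a :: k) t / Real.sinh t) s := by
  rw [← laplace_primitive hs (laplaceIntegrable_polylogTanh_div_sinh hk a hs)]
  refine laplace_congr (fun t ht => ?_) s
  simp only [← Complex.ofReal_div]
  rw [intervalIntegral.integral_ofReal, polylogTanh_succ_cons a k ht.le]

theorem laplace_polylogTanh_one_cons {k : List ℕ} (hk : ∀ a ∈ k, 0 < a) {s : ℂ}
    (hs : 0 < s.re) : laplace (fun t => polylogTanh (1 :: k) t) s =
      s⁻¹ * laplace (fun t => polylogTanh k t) s := by
  rw [laplace_polylogTanh_succ_cons hk 0 hs]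
  refine congrArg _ (laplace_congr (fun t ht => ?_) s)
  have hsinh : (Real.sinh t : ℂ) ≠ 0 := mod_cast (Real.sinh_pos_iff.2 ht).ne'
  rw [polylogTanh_zero_cons k ht.le, Complex.ofReal_mul, mul_div_cancel_right₀ _ hsinh]

theorem dualExponents_succ_succ_cons (b : ℕ) (k : List ℕ) :
    dualExponents ((b + 2) :: k) = 1 :: dualExponents ((b + 1) :: k) := rfl

theorem hasSum_laplace_polylogTanh_one_cons {k L : List ℕ} {d : ℕ} {s : ℂ}
    (hk : ∀ a ∈ k, 0 < a) (hs : 0 < s.re)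
    (h : HasSum (fun n => s ^ (-(d : ℤ)) * hurwitzTerm L (s + 1) n)
      (laplace (fun t => polylogTanh k t) s)) :
    HasSum (fun n => s ^ (-((d + 1 : ℕ) : ℤ)) * hurwitzTerm L (s + 1) n)
      (laplace (fun t => polylogTanh (1 :: k) t) s) := by
  rw [laplace_polylogTanh_one_cons hk hs]
  refine (h.mul_left s⁻¹).congr_fun fun n => ?_
  rw [zpow_neg, zpow_neg, zpow_natCast, zpow_natCast, pow_succ', mul_inv, mul_assoc]

theorem hasSum_laplace_polylogTanh_succ_succ_cons {b d : ℕ} {k L : List ℕ}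
    (hk : ∀ a ∈ k, 0 < a)
    (h : ∀ s : ℂ, 0 < s.re → HasSum (fun n => s ^ (-(d : ℤ)) * hurwitzTerm L (s + 1) n)
      (laplace (fun t => polylogTanh ((b + 1) :: k) t) s)) {s : ℂ} (hs : 0 < s.re) :
    HasSum (fun n => s ^ (-((1 : ℕ) : ℤ)) * hurwitzTerm (d :: L) (s + 1) n)
      (laplace (fun t => polylogTanh ((b + 2) :: k) t) s) := by
  have hk' : ∀ a ∈ (b + 1) :: k, 0 < a := by simpa using hk
  have hs' : 0 < (s + 1).re := by rw [Complex.add_re, Complex.one_re]; positivity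
  have hsum := hasSum_hurwitzTerm_cons h
    (fun s hs => hasSum_laplace_polylogTanh (by simp) hk' hs) hs'
  rw [add_sub_cancel_right] at hsum
  rw [laplace_polylogTanh_succ_cons hk (b + 1) hs]
  simpa using hsum.mul_left s⁻¹

theorem exists_hasSum_laplace_polylogTanh {k : List ℕ} (hk : ∀ a ∈ k, 0 < a) :
    ∃ d L, dualExponents k = d :: L ∧ ∀ s : ℂ, 0 < s.re →
      HasSum (fun n => s ^ (-(d : ℤ)) * hurwitzTerm L (s + 1) n)
        (laplace (fun t => polylogTanh k t) s) := by
  induction k with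
  | nil =>
    refine ⟨1, [], rfl, fun s hs => ?_⟩
    simp only [polylogTanh_nil, Complex.ofReal_one, laplace_one hs, hurwitzTerm_nil]
    simp
  | cons a k ih =>
    have hk' : ∀ c ∈ k, 0 < c := fun c hc => hk c (by simp [hc])
    obtain ⟨b, rfl⟩ := Nat.exists_eq_succ_of_ne_zero (hk a (by simp)).ne'
    clear hk
    induction b with
    | zero =>
      obtain ⟨d, L, hdual, hsum⟩ := ih hk'
      exact ⟨d + 1, L, by simp [dualExponents, hdual, plusOne], fun s hs =>
        hasSum_laplace_polylogTanh_one_cons hk' hs (hsum s hs)⟩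
    | succ b ihb =>
      obtain ⟨d, L, hdual, hsum⟩ := ihb
      exact ⟨1, d :: L, by rw [dualExponents_succ_succ_cons, hdual], fun s hs =>
        hasSum_laplace_polylogTanh_succ_succ_cons hk' hsum hs⟩

theorem hasSum_hurwitzTerm_dualExponents {k : List ℕ} (hne : k ≠ []) (hk : ∀ a ∈ k, 0 < a) {s : ℂ}
    (hs : 0 < s.re) :
    HasSum (hurwitzTerm (dualExponents k) s)
      (laplace (fun t => polylogTanh k t / Real.sinh t) (s - 1)) := by
  obtain ⟨d, L, hdual, hsum⟩ := exists_hasSum_laplace_polylogTanh hk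
  rw [hdual]
  exact hasSum_hurwitzTerm_cons hsum (fun s hs => hasSum_laplace_polylogTanh hne hk hs) hs

theorem integral_div_mul_cpow_eq_laplace (f : ℝ → ℂ) (α : ℂ) :
    ∫ x in (0 : ℝ)..1, f x / (x * (((1 - x) / (1 + x) : ℝ) : ℂ) ^ α) =
      laplace (fun t => f (Real.tanh (t / 2)) / Real.sinh t) (-α) := by
  have hderiv : ∀ t ∈ Ioi (0 : ℝ), HasDerivWithinAt (fun u => Real.tanh (u / 2))
      (Real.tanh (t / 2) / Real.sinh t) (Ioi 0) t :=
    fun t ht => (hasDerivAt_tanh_half (ne_of_gt ht)).hasDerivWithinAt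
  have hinj : InjOn (fun t : ℝ => Real.tanh (t / 2)) (Ioi 0) := fun t _ u _ h => by
    simpa using Real.tanh_injective h
  rw [intervalIntegral.integral_of_le zero_le_one, integral_Ioc_eq_integral_Ioo,
    ← image_tanh_half_Ioi, integral_image_eq_integral_abs_deriv_smul measurableSet_Ioi hderiv hinj]
  refine setIntegral_congr_fun measurableSet_Ioi fun t (ht : 0 < t) => ?_
  have hsinh : 0 < Real.sinh t := Real.sinh_pos_iff.2 ht
  have htanh : 0 < Real.tanh (t / 2) := tanh_half_pos ht
  have hcpow : ((Real.exp (-t) : ℝ) : ℂ) ^ α = (Complex.exp (-(-α * t)))⁻¹ := by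
    rw [Complex.cpow_def_of_ne_zero (mod_cast (Real.exp_pos _).ne'), ← Complex.ofReal_log
      (Real.exp_pos _).le, Real.log_exp, ← Complex.exp_neg]
    push_cast
    ring_nf
  have htanh_ne : (Real.tanh (t / 2) : ℂ) ≠ 0 := mod_cast htanh.ne'
  simp only [one_sub_tanh_half_div, hcpow, abs_of_pos (div_pos htanh hsinh), Complex.real_smul]
  rw [Complex.ofReal_div]
  field_simp

end LevelTwo

theorem stmt3 (k : List ℕ) (hk : k ≠ []) (hkpos : ∀ a ∈ k, 0 < a)
    (α : ℂ) (hα : ∀ j : ℕ, 0 < j → α ≠ (j : ℂ)) (hre : α.re < 1) :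
    (∫ x in (0:ℝ)..1,
        ((AFn k x : ℝ) : ℂ) / ((x : ℂ) * (((1 - x) / (1 + x) : ℝ) : ℂ) ^ α)) =
      HMTV (plusOne (HDual k.reverse)) (1 - α) := by
  open LevelTwo in
  have hpos : 0 < (1 - α).re := by simpa using hre
  calc
    _ = laplace (fun t => polylogTanh k t / Real.sinh t) (-α) :=
      integral_div_mul_cpow_eq_laplace (fun x => AFn k x) α
    _ = laplace (fun t => polylogTanh k t / Real.sinh t) (1 - α - 1) := by ring_nf
    _ = ∑' n, hurwitzTerm (dualExponents k) (1 - α) n :=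
      (hasSum_hurwitzTerm_dualExponents hk hkpos hpos).tsum_eq.symm
    _ = HMTV (dualExponents k).reverse (1 - α) := (HMTV_reverse _ _).symm
    _ = HMTV (plusOne (HDual k.reverse)) (1 - α) := by
      rw [← reverse_plusOne_HDual_reverse hk, List.reverse_reverse]
end

section
/- Let k=(k_1,…,k_r) be a composition, let m be a positive integer, and let α∈ℂ∖ℕ with ℜ(α)<1. Then ∫_0^1 Li_k(x)·log^m(1−x)/(x(1−x)^α) dx = (−1)^m·(d^m/dα^m) ζ((←k^∨)_+; 1−α), the m-th derivative of the function α ↦ ζ((←k^∨)_+; 1−α). -/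
open scoped BigOperators
open MeasureTheory

/-! For real `α < 1` the integral `∫₀¹ Li_k(x) (1 - x)^(-α) dx / x` becomes, term by term, a series
of Beta integrals. The kernel `n B(n, j + 1 - α)` connects the weight `1 / n` with the Hurwitz
weight `1 / (j - α)`: the geometric series under the Beta integral shows that its tail sums in
either index exchange the two weights. Moving the weights of `k` across the kernel one letter at a
time dualizes and reverses the word of `k`, which turns the series into `ζ((←k^∨)₊; 1 - α)`. Hence
this Hurwitz-type zeta value is the moment generating function of `-log (1 - x)` under the measure
`Li_k(x) dx / x`. By analytic continuation the identity persists on `Re α < 1`, and the `m`-th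
derivative of the moment generating function brings down `(-log (1 - x))^m`. -/

open Set ENNReal ProbabilityTheory

section NestedSum

variable {ι : Type*} [Preorder ι]

lemma tsum_tsum_Ioi_comm (f : ι → ι → ℝ≥0∞) :
    ∑' m, ∑' c : Ioi m, f m c = ∑' c, ∑' m : Iio c, f m c := by
  simp_rw [fun m => tsum_subtype (Ioi m) (f m), fun c => tsum_subtype (Iio c) fun m => f m c]
  exact ENNReal.tsum_comm

/-- The nested sum `Σ_{s ∋ n₁ > ⋯ > n_r} w(n₁)^{k₁} ⋯ w(n_r)^{k_r}`. Only the outermost index is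
restricted to `s`, so this is the sum over decreasing tuples in `s` when `s` is a lower set, while
for `s = {n}` it is the part of the series whose leading index equals `n`. -/
noncomputable def nestedSum (w : ι → ℝ≥0∞) : List ℕ → Set ι → ℝ≥0∞
  | [], _ => 1
  | a :: k, s => ∑' n : s, w n ^ a * nestedSum w k (Iio (n : ι))

lemma nestedSum_cons_singleton (w : ι → ℝ≥0∞) (a : ℕ) (k : List ℕ) (n : ι) :
    nestedSum w (a :: k) {n} = w n ^ a * nestedSum w k (Iio n) := by
  rw [nestedSum, tsum_singleton n fun n => w n ^ a * nestedSum w k (Iio n)]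

lemma nestedSum_one_singleton (w : ι → ℝ≥0∞) (n : ι) : nestedSum w [1] {n} = w n := by
  rw [nestedSum_cons_singleton, nestedSum, pow_one, mul_one]

lemma nestedSum_eq_tsum_singleton (w : ι → ℝ≥0∞) {k : List ℕ} (hk : k ≠ []) (s : Set ι) :
    nestedSum w k s = ∑' n : s, nestedSum w k {(n : ι)} := by
  obtain ⟨a, k, rfl⟩ := List.exists_cons_of_ne_nil hk
  simp_rw [nestedSum_cons_singleton, nestedSum]

lemma nestedSum_one_cons_singleton (w : ι → ℝ≥0∞) {k : List ℕ} (hk : k ≠ []) (n : ι) :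
    nestedSum w (1 :: k) {n} = w n * ∑' m : Iio n, nestedSum w k {(m : ι)} := by
  rw [nestedSum_cons_singleton, pow_one, nestedSum_eq_tsum_singleton w hk]

lemma nestedSum_plusOne_singleton (w : ι → ℝ≥0∞) {k : List ℕ} (hk : k ≠ []) (n : ι) :
    nestedSum w (plusOne k) {n} = w n * nestedSum w k {n} := by
  obtain ⟨a, k, rfl⟩ := List.exists_cons_of_ne_nil hk
  rw [plusOne, nestedSum_cons_singleton, nestedSum_cons_singleton, pow_succ', mul_assoc]

lemma plusOne_ne_nil {k : List ℕ} (hk : k ≠ []) : plusOne k ≠ [] := by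
  obtain ⟨a, k, rfl⟩ := List.exists_cons_of_ne_nil hk
  exact List.cons_ne_nil _ _

end NestedSum

section DecreasingTuples

variable {ι : Type*} [Preorder ι]

/-- The index set `n₁ > ⋯ > n_r` of a nested sum, with entries in `s`. -/
def decreasingTuples (r : ℕ) (s : Set ι) : Set (Fin r → ι) :=
  {n | StrictAnti n ∧ ∀ i, n i ∈ s}

lemma cons_mem_decreasingTuples_iff {r : ℕ} {s : Set ι} (hs : IsLowerSet s) {a : ι}
    {t : Fin r → ι} :
    (Fin.cons a t : Fin (r + 1) → ι) ∈ decreasingTuples (r + 1) s ↔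
      a ∈ s ∧ t ∈ decreasingTuples r (Iio a) := by
  constructor
  · rintro ⟨hanti, hmem⟩
    exact ⟨hmem 0, fun i j hij => hanti (Fin.succ_lt_succ_iff.mpr hij),
      fun i => hanti (Fin.succ_pos i)⟩
  · rintro ⟨ha, hanti, hlt⟩
    refine ⟨?_, Fin.cases ha fun i => hs (hlt i).le ha⟩
    intro i j hij
    induction j using Fin.cases with
    | zero => exact absurd hij (Fin.not_lt_zero i)
    | succ j =>
      induction i using Fin.cases with
      | zero => exact hlt j
      | succ i => exact hanti (Fin.succ_lt_succ_iff.mp hij)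

lemma tsum_decreasingTuples_succ {r : ℕ} {s : Set ι} (hs : IsLowerSet s)
    (F : (Fin (r + 1) → ι) → ℝ≥0∞) :
    ∑' n : decreasingTuples (r + 1) s, F n =
      ∑' a : s, ∑' t : decreasingTuples r (Iio (a : ι)), F (Fin.cons (a : ι) (t : Fin r → ι)) := by
  classical
  rw [tsum_subtype (decreasingTuples (r + 1) s),
    tsum_subtype s fun a => ∑' t : decreasingTuples r (Iio a), F (Fin.cons a (t : Fin r → ι)),
    ← (Fin.consEquiv fun _ : Fin (r + 1) => ι).tsum_eq, ENNReal.tsum_prod']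
  simp_rw [fun a => tsum_subtype (decreasingTuples r (Iio a)) fun t => F (Fin.cons a t)]
  refine tsum_congr fun a => ?_
  by_cases ha : a ∈ s <;>
    simp [indicator, Fin.consEquiv, cons_mem_decreasingTuples_iff hs, ha]

lemma nestedSum_eq_tsum_decreasingTuples (w : ι → ℝ≥0∞) (k : List ℕ) {s : Set ι}
    (hs : IsLowerSet s) :
    nestedSum w k s = ∑' n : decreasingTuples k.length s, ∏ i, w (n.1 i) ^ k.get i := by
  induction k generalizing s with
  | nil =>
    have : Unique (decreasingTuples 0 s) :=
      { default := ⟨Fin.elim0, fun i => i.elim0, fun i => i.elim0⟩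
        uniq := fun _ => Subsingleton.elim _ _ }
    simp [nestedSum, tsum_fintype]
  | cons a k ih =>
    refine Eq.trans ?_ (tsum_decreasingTuples_succ hs
      fun n => ∏ i : Fin (k.length + 1), w (n i) ^ (a :: k).get i).symm
    refine tsum_congr fun n => ?_
    simp_rw [ih (isLowerSet_Iio _), ← ENNReal.tsum_mul_left, Fin.prod_univ_succ]
    rfl

lemma tsum_decreasingTuples_leading_mul (g w : ι → ℝ≥0∞) (a : ℕ) (k : List ℕ) :
    ∑' n : decreasingTuples (k.length + 1) (univ : Set ι),
        g (n.1 0) * ∏ i, w (n.1 i) ^ (a :: k).get i =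
      ∑' n, g n * nestedSum w (a :: k) {n} := by
  rw [tsum_decreasingTuples_succ isLowerSet_univ
    fun n => g (n 0) * ∏ i : Fin (k.length + 1), w (n i) ^ (a :: k).get i,
    tsum_univ fun n => ∑' t : decreasingTuples k.length (Iio n),
      g ((Fin.cons n t.1 : Fin (k.length + 1) → ι) 0) *
        ∏ i, w ((Fin.cons n t.1 : Fin (k.length + 1) → ι) i) ^ (a :: k).get i]
  refine tsum_congr fun n => ?_
  rw [nestedSum_cons_singleton, nestedSum_eq_tsum_decreasingTuples w k (isLowerSet_Iio _)]
  simp_rw [← ENNReal.tsum_mul_left, Fin.prod_univ_succ]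
  rfl

end DecreasingTuples

lemma tsum_strictAnti_pos {M : Type*} [AddCommMonoid M] [TopologicalSpace M] {r : ℕ}
    (F : (Fin r → ℕ) → M) :
    ∑' n : {n : Fin r → ℕ // StrictAnti n ∧ ∀ i, 0 < n i}, F n =
      ∑' n : decreasingTuples r (univ : Set ℕ+), F fun i => n.1 i :=
  let e : {n : Fin r → ℕ // StrictAnti n ∧ ∀ i, 0 < n i} ≃ decreasingTuples r (univ : Set ℕ+) :=
    { toFun := fun n => ⟨fun i => ⟨n.1 i, n.2.2 i⟩, fun _ _ hij => n.2.1 hij, fun _ => mem_univ _⟩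
      invFun := fun n => ⟨fun i => n.1 i, fun _ _ hij => n.2.1 hij, fun i => (n.1 i).pos⟩ }
  e.tsum_eq fun n => F fun i => n.1 i

section ConnectedSum

variable {ι κ : Type*} [Preorder ι] [Preorder κ]
  {u : ι → ℝ≥0∞} {v : κ → ℝ≥0∞} {D : ι → κ → ℝ≥0∞} {k l : List ℕ}

/-- A connector in the sense of Seki and Yamamoto: a kernel whose tail sums move a factor `u` to a
factor `v` and conversely, the last law being the boundary case of `tsum_Ioi_left` below the least
index. -/
structure IsConnector (u : ι → ℝ≥0∞) (v : κ → ℝ≥0∞) (D : ι → κ → ℝ≥0∞) : Prop where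
  tsum_Ioi_right (n : ι) (m : κ) : ∑' c : Ioi m, D n c * v c = u n * D n m
  tsum_Ioi_left (n : ι) (m : κ) : ∑' c : Ioi n, u c * D c m = D n m * v m
  tsum_left (m : κ) : ∑' c, u c * D c m = v m

/-- The connected sum: two nested series whose leading indices are coupled by the kernel `D`. -/
noncomputable def connectedSum (u : ι → ℝ≥0∞) (v : κ → ℝ≥0∞) (D : ι → κ → ℝ≥0∞)
    (k l : List ℕ) : ℝ≥0∞ :=
  ∑' n, ∑' m, nestedSum u k {n} * D n m * nestedSum v l {m}

lemma connectedSum_swap (u : ι → ℝ≥0∞) (v : κ → ℝ≥0∞) (D : ι → κ → ℝ≥0∞) (k l : List ℕ) :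
    connectedSum u v D k l = connectedSum v u (fun m n => D n m) l k := by
  rw [connectedSum, ENNReal.tsum_comm]
  exact tsum_congr fun m => tsum_congr fun n => by ring

lemma connectedSum_plusOne_left
    (hD : ∀ n m, ∑' c : Ioi m, D n c * v c = u n * D n m) (hk : k ≠ []) (hl : l ≠ []) :
    connectedSum u v D (plusOne k) l = connectedSum u v D k (1 :: l) := by
  refine tsum_congr fun n => ?_
  calc ∑' m, nestedSum u (plusOne k) {n} * D n m * nestedSum v l {m}
      = ∑' m, ∑' c : Ioi m, nestedSum u k {n} * nestedSum v l {m} * (D n c * v c) :=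
        tsum_congr fun m => by
          rw [ENNReal.tsum_mul_left, hD, nestedSum_plusOne_singleton u hk]; ring
    _ = ∑' c, ∑' m : Iio c, nestedSum u k {n} * nestedSum v l {(m : κ)} * (D n c * v c) :=
        tsum_tsum_Ioi_comm fun m c => nestedSum u k {n} * nestedSum v l {m} * (D n c * v c)
    _ = ∑' c, nestedSum u k {n} * D n c * nestedSum v (1 :: l) {c} :=
        tsum_congr fun c => by
          rw [ENNReal.tsum_mul_right, ENNReal.tsum_mul_left, nestedSum_one_cons_singleton v hl]
          ring

namespace IsConnector

lemma connectedSum_one_cons_left (h : IsConnector u v D) (hk : k ≠ []) (hl : l ≠ []) :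
    connectedSum u v D (1 :: k) l = connectedSum u v D k (plusOne l) := by
  rw [connectedSum_swap, connectedSum_swap u v D k]
  refine (connectedSum_plusOne_left (fun m n => ?_) hl hk).symm
  simpa only [mul_comm] using h.tsum_Ioi_left n m

lemma connectedSum_one_left (h : IsConnector u v D) (hl : l ≠ []) :
    connectedSum u v D [1] l = nestedSum v (plusOne l) univ := by
  rw [nestedSum_eq_tsum_singleton v (plusOne_ne_nil hl), connectedSum, ENNReal.tsum_comm,
    tsum_univ fun m => nestedSum v (plusOne l) {m}]
  refine tsum_congr fun m => ?_
  simp_rw [nestedSum_one_singleton]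
  rw [ENNReal.tsum_mul_right, h.tsum_left, nestedSum_plusOne_singleton v hl]

end IsConnector

end ConnectedSum

section Words

lemma fromWord_ne_nil (w : List Bool) : fromWord w ≠ [] := by
  induction w using fromWord.induct <;> simp_all [fromWord]

lemma fromWord_false_cons (w : List Bool) : fromWord (false :: w) = plusOne (fromWord w) := by
  obtain ⟨a, k, h⟩ := List.exists_cons_of_ne_nil (fromWord_ne_nil w)
  simp only [fromWord, h, plusOne]

lemma pos_of_mem_fromWord {w : List Bool} : ∀ {a : ℕ}, a ∈ fromWord w → 0 < a := by
  induction w with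
  | nil => simp [fromWord]
  | cons b w ih =>
    cases b with
    | true => simpa [fromWord] using fun _ => ih
    | false =>
      obtain ⟨a, k, h⟩ := List.exists_cons_of_ne_nil (fromWord_ne_nil w)
      rw [h] at ih
      simp_all [fromWord_false_cons, plusOne]

lemma toWord_succ_cons {a : ℕ} (ha : 1 ≤ a) (k : List ℕ) :
    toWord ((a + 1) :: k) = false :: toWord (a :: k) := by
  obtain ⟨a, rfl⟩ := Nat.exists_eq_add_of_le' ha
  cases k <;> simp [toWord, List.replicate_succ]

lemma fromWord_toWord {k : List ℕ} (hk : k ≠ []) (hpos : ∀ a ∈ k, 0 < a) :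
    fromWord (toWord k) = k := by
  induction k with
  | nil => contradiction
  | cons a k ih =>
    obtain ⟨ha, hk_pos⟩ := List.forall_mem_cons.mp hpos
    induction a, ha using Nat.le_induction with
    | base =>
      cases k with
      | nil => simp [toWord, fromWord]
      | cons b k => simpa [toWord, fromWord] using ih (List.cons_ne_nil b k) hk_pos
    | succ a ha iha =>
      have hcons : ∀ b ∈ a :: k, 0 < b := List.forall_mem_cons.mpr ⟨ha, hk_pos⟩
      rw [toWord_succ_cons ha, fromWord_false_cons, iha (List.cons_ne_nil a k) hcons, plusOne]

lemma toWord_append_singleton {k : List ℕ} (hk : k ≠ []) (a : ℕ) :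
    toWord (k ++ [a]) = toWord k ++ true :: List.replicate (a - 1) false := by
  induction k using toWord.induct with
  | case1 => contradiction
  | case2 => simp [toWord]
  | case3 b c k ih => simpa [toWord] using ih (List.cons_ne_nil c k)

lemma toWord_reverse (k : List ℕ) : toWord k.reverse = (toWord k).reverse := by
  induction k using toWord.induct with
  | case1 | case2 => simp [toWord]
  | case3 b c k ih =>
    rw [List.reverse_cons, toWord_append_singleton (by simp), ih]
    simp [toWord]

lemma HDual_reverse (k : List ℕ) :
    HDual k.reverse = fromWord ((toWord k).map fun b => !b).reverse := by
  rw [HDual, toWord_reverse, List.map_reverse]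

/-- An index for which the nested series converges: positive entries, the first at least two. -/
def IsAdmissible (k : List ℕ) : Prop :=
  ∃ a l, k = a :: l ∧ 2 ≤ a ∧ ∀ b ∈ l, 0 < b

lemma isAdmissible_plusOne_HDual (k : List ℕ) : IsAdmissible (plusOne (HDual k)) := by
  obtain ⟨a, l, h⟩ := List.exists_cons_of_ne_nil (fromWord_ne_nil ((toWord k).map fun b => !b))
  have hpos : ∀ b ∈ a :: l, 0 < b := h ▸ fun _ => pos_of_mem_fromWord
  obtain ⟨ha, hl⟩ := List.forall_mem_cons.mp hpos
  exact ⟨a + 1, l, by rw [HDual, h, plusOne], by omega, hl⟩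

end Words

namespace IsConnector

variable {ι κ : Type*} [Preorder ι] [Preorder κ]
  {u : ι → ℝ≥0∞} {v : κ → ℝ≥0∞} {D : ι → κ → ℝ≥0∞}

lemma connectedSum_fromWord (h : IsConnector u v D) (w₁ w₂ : List Bool) :
    connectedSum u v D (fromWord w₁) (fromWord w₂) =
      nestedSum v (plusOne (fromWord ((w₁.map fun b => !b).reverse ++ w₂))) univ := by
  induction w₁ generalizing w₂ with
  | nil => exact h.connectedSum_one_left (fromWord_ne_nil w₂)
  | cons b w₁ ih =>
    have transport : connectedSum u v D (fromWord (b :: w₁)) (fromWord w₂) =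
        connectedSum u v D (fromWord w₁) (fromWord ((!b) :: w₂)) := by
      cases b with
      | false =>
        rw [fromWord_false_cons]
        exact connectedSum_plusOne_left h.tsum_Ioi_right (fromWord_ne_nil _) (fromWord_ne_nil _)
      | true =>
        rw [Bool.not_true, fromWord_false_cons]
        exact h.connectedSum_one_cons_left (fromWord_ne_nil _) (fromWord_ne_nil _)
    rw [transport, ih]
    simp

theorem connectedSum_one_right (h : IsConnector u v D) {k : List ℕ} (hk : k ≠ [])
    (hpos : ∀ a ∈ k, 0 < a) :
    connectedSum u v D k [1] = nestedSum v (plusOne (HDual k.reverse)) univ := by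
  have := h.connectedSum_fromWord (toWord k) []
  rwa [fromWord_toWord hk hpos, List.append_nil, ← HDual_reverse] at this

end IsConnector

section Beta

variable {p q : ℝ}

lemma lintegral_rpow_mul_one_sub_rpow (hp : 0 < p) (hq : 0 < q) :
    ∫⁻ x in Ioo (0 : ℝ) 1, ENNReal.ofReal (x ^ (p - 1) * (1 - x) ^ (q - 1)) =
      ENNReal.ofReal (beta p q) := by
  have hbeta := beta_pos hp hq
  have hmass := lintegral_betaPDF_eq_one hp hq
  simp_rw [lintegral_betaPDF, mul_assoc, ENNReal.ofReal_mul (one_div_pos.mpr hbeta).le] at hmass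
  rw [lintegral_const_mul _ (by fun_prop)] at hmass
  have hinv : ENNReal.ofReal (beta p q) * ENNReal.ofReal (1 / beta p q) = 1 := by
    rw [← ENNReal.ofReal_mul hbeta.le, mul_one_div_cancel hbeta.ne', ENNReal.ofReal_one]
  rw [← one_mul (lintegral _ _), ← hinv, mul_assoc, hmass, mul_one]

lemma beta_symm (p q : ℝ) : beta p q = beta q p := by
  rw [beta, beta, mul_comm, add_comm]

lemma mul_beta_add_one (hp : 0 < p) (hq : 0 < q) :
    p * beta p (q + 1) = q * beta (p + 1) q := by
  rw [beta, beta, Real.Gamma_add_one hp.ne', Real.Gamma_add_one hq.ne',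
    add_right_comm p 1 q, ← add_assoc]
  ring

lemma beta_one_right (hp : 0 < p) : beta p 1 = p⁻¹ := by
  have := (Real.Gamma_pos_of_pos hp).ne'
  rw [beta, Real.Gamma_one, Real.Gamma_add_one hp.ne']
  field_simp

lemma tsum_ofReal_mul_geometric {y : ℝ} (h0 : 0 ≤ y) (h1 : y < 1) {c : ℝ} (hc : 0 ≤ c) :
    ∑' j : ℕ, ENNReal.ofReal (c * y ^ j) = ENNReal.ofReal (c / (1 - y)) := by
  rw [← ENNReal.ofReal_tsum_of_nonneg (fun j => by positivity)
    ((summable_geometric_of_lt_one h0 h1).mul_left c), tsum_mul_left,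
    tsum_geometric_of_lt_one h0 h1, div_eq_mul_inv]

lemma tsum_ofReal_beta_add_right (hp : 0 < p) (hq : 0 < q) :
    ∑' j : ℕ, ENNReal.ofReal (beta (p + 1) (q + j)) = ENNReal.ofReal (beta p q) := by
  simp_rw [fun j : ℕ => (lintegral_rpow_mul_one_sub_rpow (p := p + 1) (q := q + j)
    (by positivity) (by positivity)).symm]
  rw [← lintegral_tsum (fun j => by fun_prop), ← lintegral_rpow_mul_one_sub_rpow hp hq]
  refine setLIntegral_congr_fun measurableSet_Ioo fun x hx => ?_
  obtain ⟨hx0, hx1⟩ : 0 < x ∧ 0 < 1 - x := ⟨hx.1, sub_pos.mpr hx.2⟩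
  have hterm (j : ℕ) : x ^ (p + 1 - 1) * (1 - x) ^ (q + j - 1) =
      x ^ p * (1 - x) ^ (q - 1) * (1 - x) ^ j := by
    rw [add_sub_cancel_right, add_sub_right_comm, Real.rpow_add hx1, Real.rpow_natCast, mul_assoc]
  simp_rw [hterm]
  rw [tsum_ofReal_mul_geometric hx1.le (by linarith) (by positivity), _root_.sub_sub_cancel,
    Real.rpow_sub_one hx0.ne', mul_div_right_comm]

end Beta

lemma tsum_pnat_eq_tsum_succPNat {M : Type*} [AddCommMonoid M] [TopologicalSpace M] (f : ℕ+ → M) :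
    ∑' n, f n = ∑' j : ℕ, f j.succPNat :=
  (Equiv.pnatEquivNat.symm.tsum_eq f).symm

lemma tsum_Ioi_pnat {M : Type*} [AddCommMonoid M] [TopologicalSpace M] (m : ℕ+) (f : ℕ+ → M) :
    ∑' n : Ioi m, f n = ∑' j : ℕ, f (m + j.succPNat) := by
  let e : ℕ+ ≃ Ioi m :=
    { toFun := fun j => ⟨m + j, PNat.lt_add_right m j⟩
      invFun := fun n => n - m
      left_inv := fun j => by simp only [add_comm m j, PNat.add_sub]
      right_inv := fun n => Subtype.ext (PNat.add_sub_of_lt n.2) }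
  rw [← e.tsum_eq, ← tsum_pnat_eq_tsum_succPNat fun j => f (m + j)]
  rfl

section BetaConnector

variable {α : ℝ}

/-- The factor `(n + α - 1)⁻¹` of the Hurwitz-type series; for `α = 1` this is `n⁻¹`. -/
noncomputable def hurwitzWeight (α : ℝ) (n : ℕ+) : ℝ≥0∞ :=
  ENNReal.ofReal (n + α - 1)⁻¹

/-- The kernel `n B(n, m + α) = Γ(n + 1) Γ(m + α) / Γ(n + m + α)`. -/
noncomputable def betaConnector (α : ℝ) (n m : ℕ+) : ℝ≥0∞ :=
  ENNReal.ofReal (n * beta n (m + α))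

lemma add_sub_one_pos (hα : 0 < α) (n : ℕ+) : 0 < (n : ℝ) + α - 1 := by
  have : (1 : ℝ) ≤ n := Nat.one_le_cast.mpr n.pos
  linarith

lemma hurwitzWeight_mul_betaConnector (n m : ℕ+) :
    hurwitzWeight 1 n * betaConnector α n m = ENNReal.ofReal (beta n (m + α)) := by
  have hn : (0 : ℝ) < n := mod_cast n.pos
  rw [hurwitzWeight, betaConnector, add_sub_cancel_right, ← ENNReal.ofReal_mul (by positivity),
    inv_mul_cancel_left₀ hn.ne']

lemma betaConnector_mul_hurwitzWeight (hα : 0 < α) (n m : ℕ+) :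
    betaConnector α n m * hurwitzWeight α m = ENNReal.ofReal (beta (n + 1) (m + α - 1)) := by
  have hn : (0 : ℝ) < n := mod_cast n.pos
  have hm := add_sub_one_pos hα m
  have hrec := mul_beta_add_one hn hm
  rw [sub_add_cancel] at hrec
  rw [hurwitzWeight, betaConnector, ← ENNReal.ofReal_mul' (by positivity), hrec, mul_comm,
    inv_mul_cancel_left₀ hm.ne']

lemma isConnector_betaConnector (hα : 0 < α) :
    IsConnector (hurwitzWeight 1) (hurwitzWeight α) (betaConnector α) where
  tsum_Ioi_right n m := by
    rw [tsum_Ioi_pnat m fun c => betaConnector α n c * hurwitzWeight α c,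
      hurwitzWeight_mul_betaConnector,
      ← tsum_ofReal_beta_add_right (by positivity) (by positivity)]
    refine tsum_congr fun j => ?_
    rw [betaConnector_mul_hurwitzWeight hα]
    push_cast [Nat.succPNat_coe]
    congr 2
    ring
  tsum_Ioi_left n m := by
    rw [tsum_Ioi_pnat n fun c => hurwitzWeight 1 c * betaConnector α c m,
      betaConnector_mul_hurwitzWeight hα, beta_symm,
      ← tsum_ofReal_beta_add_right (add_sub_one_pos hα m) (by positivity)]
    refine tsum_congr fun j => ?_
    rw [hurwitzWeight_mul_betaConnector, beta_symm, sub_add_cancel]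
    push_cast [Nat.succPNat_coe]
    congr 2
    ring
  tsum_left m := by
    rw [tsum_pnat_eq_tsum_succPNat, hurwitzWeight, ← beta_one_right (add_sub_one_pos hα m),
      ← tsum_ofReal_beta_add_right (add_sub_one_pos hα m) one_pos]
    refine tsum_congr fun j => ?_
    rw [hurwitzWeight_mul_betaConnector, beta_symm, sub_add_cancel]
    push_cast [Nat.succPNat_coe]
    congr 2
    ring

lemma tsum_betaConnector_mul_hurwitzWeight (hα : 0 < α) (n : ℕ+) :
    ∑' m, betaConnector α n m * hurwitzWeight α m = ENNReal.ofReal (beta n α) := by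
  rw [tsum_pnat_eq_tsum_succPNat, ← tsum_ofReal_beta_add_right (by positivity) hα]
  refine tsum_congr fun j => ?_
  rw [betaConnector_mul_hurwitzWeight hα]
  push_cast [Nat.succPNat_coe]
  congr 2
  ring

end BetaConnector

section Convergence

variable {w : ℕ+ → ℝ≥0∞} {C : ℝ≥0∞}

lemma tsum_pnat_rpow_neg_ne_top {s : ℝ} (hs : 1 < s) :
    ∑' n : ℕ+, (n : ℝ≥0∞) ^ (-s) ≠ ∞ := by
  have hsum : Summable fun n : ℕ+ => (n : ℝ) ^ (-s) :=
    (Real.summable_nat_rpow.mpr (by linarith)).comp_injective PNat.coe_injective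
  convert hsum.tsum_ofReal_ne_top using 3 with n
  rw [← ENNReal.ofReal_rpow_of_pos (mod_cast n.pos), ENNReal.ofReal_natCast]

lemma pow_mul_le_mul_rpow {a b : ℕ} (hba : b ≤ a) {n : ℕ+} {x y K : ℝ≥0∞} {t : ℝ}
    (hx : x ≤ C * (n : ℝ≥0∞)⁻¹) (hy : y ≤ K * (n : ℝ≥0∞) ^ t) :
    x ^ a * y ≤ C ^ a * K * (n : ℝ≥0∞) ^ (t - b) := by
  have hinv : ((n : ℝ≥0∞)⁻¹) ^ a ≤ (n : ℝ≥0∞) ^ (-(b : ℝ)) := by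
    rw [ENNReal.rpow_neg, ENNReal.rpow_natCast, ENNReal.inv_pow]
    exact pow_le_pow_of_le_one zero_le (ENNReal.inv_le_one.mpr (Nat.one_le_cast.mpr n.pos)) hba
  calc x ^ a * y ≤ (C * (n : ℝ≥0∞)⁻¹) ^ a * (K * (n : ℝ≥0∞) ^ t) := by gcongr
    _ ≤ C ^ a * (n : ℝ≥0∞) ^ (-(b : ℝ)) * (K * (n : ℝ≥0∞) ^ t) := by rw [mul_pow]; gcongr
    _ = C ^ a * K * (n : ℝ≥0∞) ^ (t - b) := by
      rw [sub_eq_neg_add, ENNReal.rpow_add _ _ (by simp) (by simp)]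
      ring

lemma exists_nestedSum_Iio_le_mul_rpow (hC : C ≠ ∞) (hw : ∀ n, w n ≤ C * (n : ℝ≥0∞)⁻¹)
    {k : List ℕ} (hk : ∀ a ∈ k, 0 < a) {t : ℝ} (ht : 0 < t) :
    ∃ K ≠ ∞, ∀ n : ℕ+, nestedSum w k (Iio n) ≤ K * (n : ℝ≥0∞) ^ t := by
  induction k generalizing t with
  | nil =>
    refine ⟨1, one_ne_top, fun n => ?_⟩
    rw [nestedSum, one_mul]
    exact ENNReal.one_le_rpow (Nat.one_le_cast.mpr n.pos) ht
  | cons a k ih =>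
    obtain ⟨ha, hk⟩ := List.forall_mem_cons.mp hk
    obtain ⟨K, hK, hle⟩ := ih hk (half_pos ht)
    refine ⟨C ^ a * K * ∑' m : ℕ+, (m : ℝ≥0∞) ^ (-(1 + t / 2)),
      mul_ne_top (mul_ne_top (pow_ne_top hC) hK) (tsum_pnat_rpow_neg_ne_top (by linarith)),
      fun n => ?_⟩
    have hterm (m : Iio n) : w m ^ a * nestedSum w k (Iio (m : ℕ+)) ≤
        C ^ a * K * (n : ℝ≥0∞) ^ t * (m : ℝ≥0∞) ^ (-(1 + t / 2)) := by
      have hmn : (m : ℝ≥0∞) ≤ n := by exact_mod_cast (mem_Iio.mp m.2).le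
      calc w m ^ a * nestedSum w k (Iio (m : ℕ+))
          ≤ C ^ a * K * (m : ℝ≥0∞) ^ (t / 2 - (1 : ℕ)) := pow_mul_le_mul_rpow ha (hw m) (hle m)
        _ = C ^ a * K * ((m : ℝ≥0∞) ^ t * (m : ℝ≥0∞) ^ (-(1 + t / 2))) := by
          rw [← ENNReal.rpow_add _ _ (by simp) (by simp)]
          congr 2
          push_cast
          ring
        _ ≤ C ^ a * K * (n : ℝ≥0∞) ^ t * (m : ℝ≥0∞) ^ (-(1 + t / 2)) := by
          rw [mul_assoc _ ((n : ℝ≥0∞) ^ t)]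
          gcongr
    calc nestedSum w (a :: k) (Iio n)
        ≤ ∑' m : Iio n, C ^ a * K * (n : ℝ≥0∞) ^ t * (m : ℝ≥0∞) ^ (-(1 + t / 2)) :=
          ENNReal.tsum_le_tsum hterm
      _ ≤ C ^ a * K * (n : ℝ≥0∞) ^ t * ∑' m : ℕ+, (m : ℝ≥0∞) ^ (-(1 + t / 2)) := by
          rw [ENNReal.tsum_mul_left]
          gcongr
          exact ENNReal.tsum_comp_le_tsum_of_injective Subtype.val_injective _
      _ = _ := mul_right_comm _ _ _

lemma IsAdmissible.nestedSum_ne_top {k : List ℕ} (hk : IsAdmissible k) (hC : C ≠ ∞)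
    (hw : ∀ n, w n ≤ C * (n : ℝ≥0∞)⁻¹) : nestedSum w k univ ≠ ∞ := by
  obtain ⟨a, l, rfl, ha, hl⟩ := hk
  obtain ⟨K, hK, hle⟩ := exists_nestedSum_Iio_le_mul_rpow hC hw hl (t := 1 / 2) (by norm_num)
  refine ne_top_of_le_ne_top (mul_ne_top (mul_ne_top (pow_ne_top hC) hK)
    (tsum_pnat_rpow_neg_ne_top (s := 3 / 2) (by norm_num))) (b := C ^ a * K * _) ?_
  rw [nestedSum, tsum_univ fun n => w n ^ a * nestedSum w l (Iio n), ← ENNReal.tsum_mul_left]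
  refine ENNReal.tsum_le_tsum fun n => (pow_mul_le_mul_rpow ha (hw n) (hle n)).trans_eq ?_
  norm_num

lemma hurwitzWeight_le {α : ℝ} (hα : 0 < α) (n : ℕ+) :
    hurwitzWeight α n ≤ ENNReal.ofReal (min α 1)⁻¹ * (n : ℝ≥0∞)⁻¹ := by
  have hn : (1 : ℝ) ≤ n := Nat.one_le_cast.mpr n.pos
  have hmin : 0 < min α 1 := lt_min hα one_pos
  have hle : min α 1 * n ≤ n + α - 1 := by
    nlinarith [min_le_left α 1, min_le_right α 1]
  rw [hurwitzWeight, ← ENNReal.ofReal_natCast (n : ℕ), ← ENNReal.ofReal_inv_of_pos (by positivity),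
    ← ENNReal.ofReal_mul (inv_nonneg.mpr hmin.le), ← mul_inv]
  gcongr

lemma IsAdmissible.nestedSum_hurwitzWeight_ne_top {k : List ℕ} (hk : IsAdmissible k) {α : ℝ}
    (hα : 0 < α) : nestedSum (hurwitzWeight α) k univ ≠ ∞ :=
  hk.nestedSum_ne_top ofReal_ne_top (hurwitzWeight_le hα)

end Convergence

section Polylog

/-- The multiple polylogarithm with values in `[0, ∞]`, grouped by the leading index. -/
noncomputable def ePolylog (k : List ℕ) (x : ℝ) : ℝ≥0∞ :=
  ∑' n : ℕ+, ENNReal.ofReal x ^ (n : ℕ) * nestedSum (hurwitzWeight 1) k {n}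

@[fun_prop]
lemma measurable_ePolylog (k : List ℕ) : Measurable (ePolylog k) :=
  Measurable.tsum fun n => by fun_prop

lemma toReal_hurwitzWeight {α : ℝ} (hα : 0 < α) (n : ℕ+) :
    (hurwitzWeight α n).toReal = (n + α - 1)⁻¹ :=
  toReal_ofReal (inv_nonneg.mpr (add_sub_one_pos hα n).le)

variable {k : List ℕ} (n : Fin k.length → ℕ+)

lemma prod_hurwitzWeight_pow_ne_top (α : ℝ) : ∏ i, hurwitzWeight α (n i) ^ k.get i ≠ ∞ :=
  prod_ne_top fun _ _ => pow_ne_top ofReal_ne_top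

lemma toReal_prod_hurwitzWeight_pow {α : ℝ} (hα : 0 < α) :
    (∏ i, hurwitzWeight α (n i) ^ k.get i).toReal = (∏ i, ((n i : ℝ) + α - 1) ^ k.get i)⁻¹ := by
  simp_rw [toReal_prod, toReal_pow, toReal_hurwitzWeight hα, inv_pow, Finset.prod_inv_distrib]

lemma ePolylog_cons (a : ℕ) (k : List ℕ) (x : ℝ) :
    ePolylog (a :: k) x = ∑' n : decreasingTuples (k.length + 1) (univ : Set ℕ+),
      ENNReal.ofReal x ^ (n.1 0 : ℕ) * ∏ i, hurwitzWeight 1 (n.1 i) ^ (a :: k).get i :=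
  (tsum_decreasingTuples_leading_mul (fun n : ℕ+ => ENNReal.ofReal x ^ (n : ℕ)) _ a k).symm

lemma MPL_cons (a : ℕ) (k : List ℕ) (x : ℝ) :
    MPL (a :: k) x = ∑' n : decreasingTuples (k.length + 1) (univ : Set ℕ+),
      x ^ (n.1 0 : ℕ) / ∏ i, (n.1 i : ℝ) ^ (a :: k).get i := by
  rw [MPL, dif_pos (by simp)]
  exact tsum_strictAnti_pos fun n : Fin (k.length + 1) → ℕ =>
    x ^ n 0 / ∏ i, (n i : ℝ) ^ (a :: k).get i

lemma MPL_eq_toReal_ePolylog (hk : k ≠ []) {x : ℝ} (hx : 0 ≤ x) :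
    MPL k x = (ePolylog k x).toReal := by
  obtain ⟨a, k, rfl⟩ := List.exists_cons_of_ne_nil hk
  rw [MPL_cons, ePolylog_cons, tsum_toReal_eq]
  · refine tsum_congr fun n => ?_
    have hprod := toReal_prod_hurwitzWeight_pow (k := a :: k) n.1 one_pos
    simp_rw [add_sub_cancel_right] at hprod
    rw [toReal_mul, toReal_pow, toReal_ofReal hx, div_eq_mul_inv]
    exact congrArg _ hprod.symm
  · exact fun n => mul_ne_top (pow_ne_top ofReal_ne_top)
      (prod_hurwitzWeight_pow_ne_top (k := a :: k) n.1 1)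

lemma lintegral_pow_mul_inv_mul_rpow {α : ℝ} (hα : 0 < α) (n : ℕ+) :
    ∫⁻ x in Ioo (0 : ℝ) 1, ENNReal.ofReal x ^ (n : ℕ) * ENNReal.ofReal (x⁻¹ * (1 - x) ^ (α - 1)) =
      ENNReal.ofReal (beta n α) := by
  rw [← lintegral_rpow_mul_one_sub_rpow (mod_cast n.pos) hα]
  refine setLIntegral_congr_fun measurableSet_Ioo fun x hx => ?_
  have hx0 : 0 < x := hx.1
  rw [← ofReal_pow hx0.le, ← ofReal_mul (by positivity), Real.rpow_sub_one hx0.ne',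
    Real.rpow_natCast, div_eq_mul_inv, mul_assoc]

lemma lintegral_ePolylog_mul_inv_mul_rpow {k : List ℕ} (hk : k ≠ []) (hpos : ∀ a ∈ k, 0 < a)
    {α : ℝ} (hα : 0 < α) :
    ∫⁻ x in Ioo (0 : ℝ) 1, ePolylog k x * ENNReal.ofReal (x⁻¹ * (1 - x) ^ (α - 1)) =
      nestedSum (hurwitzWeight α) (plusOne (HDual k.reverse)) univ := by
  calc ∫⁻ x in Ioo (0 : ℝ) 1, ePolylog k x * ENNReal.ofReal (x⁻¹ * (1 - x) ^ (α - 1))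
      = ∑' n : ℕ+, nestedSum (hurwitzWeight 1) k {n} * ENNReal.ofReal (beta n α) := by
        simp_rw [ePolylog, ← ENNReal.tsum_mul_right]
        rw [lintegral_tsum fun n => by fun_prop]
        refine tsum_congr fun n => ?_
        simp_rw [mul_comm (_ ^ _), mul_assoc]
        rw [lintegral_const_mul _ (by fun_prop), lintegral_pow_mul_inv_mul_rpow hα]
    _ = connectedSum (hurwitzWeight 1) (hurwitzWeight α) (betaConnector α) k [1] := by
        refine tsum_congr fun n => ?_
        simp_rw [nestedSum_one_singleton, mul_assoc]
        rw [ENNReal.tsum_mul_left, tsum_betaConnector_mul_hurwitzWeight hα]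
    _ = nestedSum (hurwitzWeight α) (plusOne (HDual k.reverse)) univ :=
        (isConnector_betaConnector hα).connectedSum_one_right hk hpos

end Polylog

section PolylogMeasure

/-- The measure `Li_k(x) dx / x` on the unit interval. -/
noncomputable def polylogMeasure (k : List ℕ) : Measure ℝ :=
  (volume.restrict (Ioo 0 1)).withDensity fun x => ePolylog k x * ENNReal.ofReal x⁻¹

/-- The random variable `-log (1 - x)`, whose exponential moments turn `(1 - x) ^ (-α)` into a
moment generating function. -/
noncomputable def negLogOneSub (x : ℝ) : ℝ := -Real.log (1 - x)

@[fun_prop]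
lemma measurable_negLogOneSub : Measurable negLogOneSub := by
  unfold negLogOneSub
  fun_prop

variable {k : List ℕ} {t : ℝ}

lemma lintegral_exp_mul_negLogOneSub (hk : k ≠ []) (hpos : ∀ a ∈ k, 0 < a) (ht : t < 1) :
    ∫⁻ x, ENNReal.ofReal (Real.exp (t * negLogOneSub x)) ∂(polylogMeasure k) =
      nestedSum (hurwitzWeight (1 - t)) (plusOne (HDual k.reverse)) univ := by
  rw [← lintegral_ePolylog_mul_inv_mul_rpow hk hpos (sub_pos.mpr ht), polylogMeasure,
    lintegral_withDensity_eq_lintegral_mul _ (by fun_prop) (by fun_prop)]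
  refine setLIntegral_congr_fun measurableSet_Ioo fun x hx => ?_
  have hexp : Real.exp (t * negLogOneSub x) = (1 - x) ^ (1 - t - 1) := by
    rw [Real.rpow_def_of_pos (sub_pos.mpr hx.2), negLogOneSub]
    ring_nf
  rw [Pi.mul_apply, hexp, mul_assoc, ofReal_mul (inv_nonneg.mpr hx.1.le)]

lemma integrable_exp_mul_negLogOneSub (hk : k ≠ []) (hpos : ∀ a ∈ k, 0 < a) (ht : t < 1) :
    Integrable (fun x => Real.exp (t * negLogOneSub x)) (polylogMeasure k) := by
  refine ⟨by fun_prop, ?_⟩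
  rw [hasFiniteIntegral_iff_ofReal (ae_of_all _ fun x => (Real.exp_pos _).le),
    lintegral_exp_mul_negLogOneSub hk hpos ht]
  exact ((isAdmissible_plusOne_HDual _).nestedSum_hurwitzWeight_ne_top (sub_pos.mpr ht)).lt_top

lemma mem_interior_integrableExpSet_negLogOneSub (hk : k ≠ []) (hpos : ∀ a ∈ k, 0 < a)
    (ht : t < 1) : t ∈ interior (integrableExpSet negLogOneSub (polylogMeasure k)) :=
  interior_maximal (fun _ hs => integrable_exp_mul_negLogOneSub hk hpos hs) isOpen_Iio ht

lemma mgf_negLogOneSub (hk : k ≠ []) (hpos : ∀ a ∈ k, 0 < a) (ht : t < 1) :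
    mgf negLogOneSub (polylogMeasure k) t =
      (nestedSum (hurwitzWeight (1 - t)) (plusOne (HDual k.reverse)) univ).toReal := by
  rw [mgf, integral_eq_lintegral_of_nonneg_ae (ae_of_all _ fun x => (Real.exp_pos _).le)
    (by fun_prop), lintegral_exp_mul_negLogOneSub hk hpos ht]

lemma ae_ePolylog_mul_inv_lt_top (hk : k ≠ []) (hpos : ∀ a ∈ k, 0 < a) :
    ∀ᵐ x ∂volume.restrict (Ioo 0 1), ePolylog k x * ENNReal.ofReal x⁻¹ < ∞ := by
  refine ae_lt_top (by fun_prop) ?_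
  have hmass := lintegral_ePolylog_mul_inv_mul_rpow hk hpos one_pos
  simp_rw [sub_self, Real.rpow_zero, mul_one] at hmass
  rw [hmass]
  exact (isAdmissible_plusOne_HDual _).nestedSum_hurwitzWeight_ne_top one_pos

lemma integral_polylogMeasure {E : Type*} [NormedAddCommGroup E] [NormedSpace ℝ E]
    (hk : k ≠ []) (hpos : ∀ a ∈ k, 0 < a) (f : ℝ → E) :
    ∫ x, f x ∂(polylogMeasure k) = ∫ x in (0 : ℝ)..1, (MPL k x / x) • f x := by
  rw [polylogMeasure, integral_withDensity_eq_integral_toReal_smul (by fun_prop)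
    (ae_ePolylog_mul_inv_lt_top hk hpos), intervalIntegral.integral_of_le zero_le_one,
    integral_Ioc_eq_integral_Ioo]
  refine setIntegral_congr_fun measurableSet_Ioo fun x hx => ?_
  rw [MPL_eq_toReal_ePolylog hk hx.1.le, toReal_mul, toReal_ofReal (inv_nonneg.mpr hx.1.le),
    div_eq_mul_inv]

lemma log_pow_div_mul_cpow {x : ℝ} (hx : x < 1) (c : ℝ) (m : ℕ) (α : ℂ) :
    ((c * Real.log (1 - x) ^ m : ℝ) : ℂ) / (x * (1 - x : ℂ) ^ α) =
      (-1) ^ m * ((c / x) • ((negLogOneSub x : ℂ) ^ m * Complex.exp (α * negLogOneSub x))) := by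
  have hbase : (1 - x : ℂ) = (1 - x : ℝ) := by push_cast; rfl
  have hcpow : (1 - x : ℂ) ^ α = (Complex.exp (α * negLogOneSub x))⁻¹ := by
    rw [hbase, Complex.cpow_def_of_ne_zero (mod_cast (sub_pos.mpr hx).ne'),
      ← Complex.ofReal_log (sub_pos.mpr hx).le, ← Complex.exp_neg, negLogOneSub]
    push_cast
    ring_nf
  have hlog : (Real.log (1 - x) : ℂ) ^ m = (-1) ^ m * (negLogOneSub x : ℂ) ^ m := by
    rw [negLogOneSub, ← mul_pow]
    push_cast
    ring
  rw [hcpow, Complex.real_smul]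
  push_cast
  rw [hlog, div_eq_mul_inv, mul_inv, inv_inv]
  ring

end PolylogMeasure

section Hurwitz

variable {k : List ℕ}

lemma HMZV_eq_tsum_decreasingTuples (k : List ℕ) (z : ℂ) :
    HMZV k z = ∑' n : decreasingTuples k.length (univ : Set ℕ+),
      ∏ i, ((n.1 i : ℂ) + z - 1) ^ (-(k.get i : ℤ)) :=
  tsum_strictAnti_pos fun n => ∏ i, ((n i : ℂ) + z - 1) ^ (-(k.get i : ℤ))

lemma norm_prod_zpow_le_toReal_prod {α : ℝ} (hα : 0 < α) {z : ℂ} (hz : α ≤ z.re)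
    (n : Fin k.length → ℕ+) :
    ‖∏ i, ((n i : ℂ) + z - 1) ^ (-(k.get i : ℤ))‖ ≤
      (∏ i, hurwitzWeight α (n i) ^ k.get i).toReal := by
  rw [toReal_prod_hurwitzWeight_pow n hα, norm_prod, ← Finset.prod_inv_distrib]
  refine Finset.prod_le_prod (fun i _ => norm_nonneg _) fun i _ => ?_
  have hpos := add_sub_one_pos hα (n i)
  have hle : (n i : ℝ) + α - 1 ≤ ‖(n i : ℂ) + z - 1‖ := by
    refine le_trans ?_ (Complex.re_le_norm _)
    simpa using hz
  rw [zpow_neg, zpow_natCast, norm_inv, norm_pow]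
  gcongr

lemma HMZV_ofReal {α : ℝ} (hα : 0 < α) (k : List ℕ) :
    HMZV k α = ((nestedSum (hurwitzWeight α) k univ).toReal : ℂ) := by
  rw [HMZV_eq_tsum_decreasingTuples, nestedSum_eq_tsum_decreasingTuples _ _ isLowerSet_univ,
    tsum_toReal_eq, Complex.ofReal_tsum]
  · refine tsum_congr fun n => ?_
    rw [toReal_prod_hurwitzWeight_pow n.1 hα]
    push_cast
    simp_rw [zpow_neg, zpow_natCast, Finset.prod_inv_distrib]
  · exact fun n => prod_hurwitzWeight_pow_ne_top n.1 α

lemma differentiableOn_HMZV (hk : IsAdmissible k) :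
    DifferentiableOn ℂ (HMZV k) {z | 0 < z.re} := by
  have hhalf {α : ℝ} (hα : 0 < α) : DifferentiableOn ℂ (HMZV k) {z | α < z.re} := by
    have hfin := hk.nestedSum_hurwitzWeight_ne_top hα
    rw [nestedSum_eq_tsum_decreasingTuples _ _ isLowerSet_univ] at hfin
    rw [funext (HMZV_eq_tsum_decreasingTuples k)]
    refine Complex.differentiableOn_tsum_of_summable_norm (summable_toReal hfin) (fun n => ?_)
      (isOpen_lt continuous_const Complex.continuous_re)
      fun n z hz => norm_prod_zpow_le_toReal_prod hα (le_of_lt hz) n.1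
    refine DifferentiableOn.fun_finsetProd fun i _ =>
      DifferentiableOn.zpow (by fun_prop) (Or.inl fun z hz h => ?_)
    have hre := congrArg Complex.re h
    have := add_sub_one_pos (hα.trans hz) (n.1 i)
    simp only [Complex.sub_re, Complex.add_re, Complex.natCast_re, Complex.one_re,
      Complex.zero_re] at hre
    linarith
  intro z hz
  obtain ⟨α, hα, hαz⟩ := exists_between (show 0 < z.re from hz)
  exact ((hhalf hα).differentiableAt
    ((isOpen_lt continuous_const Complex.continuous_re).mem_nhds hαz)).differentiableWithinAt

end Hurwitz

section Continuation

lemma eqOn_of_analyticOnNhd_of_eventually_eq_ofReal {E : Type*} [NormedAddCommGroup E]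
    [NormedSpace ℂ E] {f g : ℂ → E} {U : Set ℂ} (hf : AnalyticOnNhd ℂ f U)
    (hg : AnalyticOnNhd ℂ g U) (hU : IsPreconnected U)
    {t : ℝ} (ht : (t : ℂ) ∈ U) (h : ∀ᶠ s : ℝ in nhds t, f s = g s) :
    EqOn f g U := by
  refine hf.eqOn_of_preconnected_of_frequently_eq hg hU ht ?_
  have hlim : Filter.Tendsto ((↑) : ℝ → ℂ) (nhdsWithin t {t}ᶜ) (nhdsWithin (t : ℂ) {(t : ℂ)}ᶜ) :=
    Complex.continuous_ofReal.continuousWithinAt.tendsto_nhdsWithin fun s hs => by simpa using hs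
  exact hlim.frequently (h.filter_mono nhdsWithin_le_nhds).frequently

lemma complexMGF_negLogOneSub_eqOn_HMZV {k : List ℕ} (hk : k ≠ []) (hpos : ∀ a ∈ k, 0 < a) :
    EqOn (complexMGF negLogOneSub (polylogMeasure k))
      (fun z => HMZV (plusOne (HDual k.reverse)) (1 - z)) {z | z.re < 1} := by
  have hopen : IsOpen {z : ℂ | z.re < 1} := isOpen_lt Complex.continuous_re continuous_const
  have hmgf : AnalyticOnNhd ℂ (complexMGF negLogOneSub (polylogMeasure k)) {z | z.re < 1} :=
    analyticOnNhd_complexMGF.mono fun z hz =>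
      mem_interior_integrableExpSet_negLogOneSub hk hpos hz
  have hzeta : AnalyticOnNhd ℂ (fun z => HMZV (plusOne (HDual k.reverse)) (1 - z))
      {z | z.re < 1} := by
    refine DifferentiableOn.analyticOnNhd ?_ hopen
    refine (differentiableOn_HMZV (isAdmissible_plusOne_HDual _)).comp (by fun_prop) fun z hz => ?_
    simpa using hz
  refine eqOn_of_analyticOnNhd_of_eventually_eq_ofReal hmgf hzeta
    (convex_halfSpace_re_lt 1).isPreconnected (t := 0) (by simp) ?_
  filter_upwards [Iio_mem_nhds zero_lt_one] with t ht
  rw [complexMGF_ofReal, mgf_negLogOneSub hk hpos ht, ← HMZV_ofReal (sub_pos.mpr ht)]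
  push_cast
  rfl

end Continuation

theorem stmt4 (k : List ℕ) (hk : k ≠ []) (hkpos : ∀ a ∈ k, 0 < a)
    (m : ℕ) (hm : 0 < m) (α : ℂ) (hα : ∀ j : ℕ, 0 < j → α ≠ (j : ℂ)) (hre : α.re < 1) :
    (∫ x in (0:ℝ)..1,
        ((MPL k x * Real.log (1 - x) ^ m : ℝ) : ℂ) /
          ((x : ℂ) * ((1 : ℂ) - (x : ℂ)) ^ α)) =
      (-1) ^ m *
        iteratedDeriv m (fun β : ℂ => HMZV (plusOne (HDual k.reverse)) (1 - β)) α := by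
  have hmgf := (complexMGF_negLogOneSub_eqOn_HMZV hk hkpos).eventuallyEq_of_mem
    ((isOpen_lt Complex.continuous_re continuous_const).mem_nhds hre)
  rw [← hmgf.iteratedDeriv_eq m,
    iteratedDeriv_complexMGF (mem_interior_integrableExpSet_negLogOneSub hk hkpos hre),
    integral_polylogMeasure hk hkpos, ← intervalIntegral.integral_const_mul]
  exact intervalIntegral.integral_congr_Ioo_of_le zero_le_one fun x hx =>
    log_pow_div_mul_cpow hx.2 (MPL k x) m α
end
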